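/- arXiv:1312.1587 — 6 statements merged into one kernel-verified Lean document; each statement's English description precedes it below -/
import Mathlib

section
/- Let M be a symmetric positive definite n×n real matrix, let V : ℝⁿ → ℝ and μ : ℝⁿ → ℝ^{m×n} be twice continuously differentiable, and assume C(q) = μ(q) M⁻¹ μ(q)ᵀ is invertible for every q ∈ ℝⁿ. Let T > 0 and let (q(t), p(t)) be a C¹ solution on [0, T] of the constrained Hamiltonian system q̇ = M⁻¹ p, ṗ = −V_q(q) − μ(q)ᵀ C(q)⁻¹ ( μ_q(q)[M⁻¹p, M⁻¹p] − μ(q) M⁻¹ V_q(q) ), whose initial condition satisfies μ(q(0)) M⁻¹ p(0) = 0. For a time step h > 0 define the nonholonomic Euler A discrete trajectory by q_0 = q(0), p_{−1/2} = p(0), and for k ≥ 0: p_{k+1/2} = p_{k−1/2} − h V_q(q_k) − 2 μ(q_k)ᵀ C(q_k)⁻¹ μ(q_k) M⁻¹ p_{k−1/2} and q_{k+1} = q_k + h M⁻¹ p_{k+1/2}. Then the method is globally first-order convergent: there exist constants K > 0 and h₀ > 0 such that for all 0 < h ≤ h₀ and all integers k ≥ 0 with k·h ≤ T one has ‖q_k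 − q(k·h)‖ ≤ K·h. -/
open Matrix

/-- The continuous linear functional on `ℝⁿ` given by dot product with `w`;
used to express gradients of scalar functions. -/
noncomputable def vecCLM {n : ℕ} (w : Fin n → ℝ) : (Fin n → ℝ) →L[ℝ] ℝ :=
  ∑ i, w i • ContinuousLinearMap.proj (R := ℝ) (φ := fun _ : Fin n => ℝ) i

/-!
Let `A(q)` be the projection `μᵀ C⁻¹ μ M⁻¹`. The momentum update applies the reflection
`1 - 2 A(q)`, which is far from the identity, so the momentum error does not obey a naive `1 + O(h)`
recursion. The constraint is preserved by the exact flow, so that `A(q) p = 0`, and the reflection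
fixes the exact momentum while it reverses the constraint force, which lies in the range of `A(q)`.
Hence the discrete momentum stays close to a shadow of the exact one, namely `p` with its
`A(Q)`-component removed, where `Q` is the numerical position, plus half an impulse of the
constraint force. One step multiplies the deviation from this shadow by the reflection, up to a
defect of size `h` times the total error. The delicate term of the defect, the change of
`A(Q) - A(q)` over a step, is a second difference of the `C²` map `A`, which gains the factor `h`.

The norm `‖x - A x‖ + ‖A x‖` is invariant under the reflection and varies by `O(h)` with the base
point, so in it the error grows by a factor `1 + O(h)` per step as long as it stays bounded. A
discrete Grönwall argument propagates the bound and closes this bootstrap.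
-/

open Set Filter
open scoped NNReal

lemma eventually_norm_le_of_continuousOn {X F : Type*} [TopologicalSpace X]
    [SeminormedAddCommGroup F] {f : X → F} {s : Set X} (hs : IsCompact s) (hf : ContinuousOn f s) :
    ∀ᶠ K : ℝ≥0 in atTop, ∀ x ∈ s, ‖f x‖ ≤ K := by
  obtain ⟨K, hK⟩ := hs.exists_bound_of_continuousOn hf
  filter_upwards [eventually_ge_atTop K.toNNReal] with C hC x hx
  exact (hK x hx).trans (Real.toNNReal_le_iff_le_coe.1 hC)

lemma eventually_lipschitzOnWith {X Y : Type*} [PseudoEMetricSpace X] [PseudoEMetricSpace Y]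
    {f : X → Y} {s : Set X} {K : ℝ≥0} (hf : LipschitzOnWith K f s) :
    ∀ᶠ C : ℝ≥0 in atTop, LipschitzOnWith C f s :=
  (eventually_ge_atTop K).mono fun _ ↦ hf.weaken

section Calculus

variable {E F : Type*} [NormedAddCommGroup E] [NormedSpace ℝ E]
  [NormedAddCommGroup F] [NormedSpace ℝ F]

lemma exists_lipschitzOnWith_of_hasDerivWithinAt {f f' : ℝ → F} {s : Set ℝ} (hs : Convex ℝ s)
    (hs' : IsCompact s) (hf : ∀ t ∈ s, HasDerivWithinAt f (f' t) s t) (hf' : ContinuousOn f' s) :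
    ∃ K, LipschitzOnWith K f s := by
  obtain ⟨K, hK⟩ := (eventually_norm_le_of_continuousOn hs' hf').exists
  exact ⟨K, hs.lipschitzOnWith_of_nnnorm_hasDerivWithin_le hf hK⟩

lemma exists_lipschitzOnWith_comp_prodMk {X G : Type*} [PseudoMetricSpace X]
    [NormedAddCommGroup G] [NormedSpace ℝ G] {φ : E × F → G} (hφ : ContDiff ℝ 1 φ) {u : X → E}
    {v : X → F} {s : Set X} (hs : IsCompact s) {K L : ℝ≥0} (hu : LipschitzOnWith K u s)
    (hv : LipschitzOnWith L v s) : ∃ M, LipschitzOnWith M (fun x ↦ φ (u x, v x)) s := by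
  have huv := hu.prodMk hv
  obtain ⟨M, hM⟩ := hφ.locallyLipschitz.locallyLipschitzOn.exists_lipschitzOnWith_of_compact
    (hs.image_of_continuousOn huv.continuousOn)
  exact ⟨_, hM.comp huv (mapsTo_image _ s)⟩

lemma norm_sub_sub_smul_deriv_le {f f' : ℝ → F} {s : Set ℝ} {K : ℝ≥0} (hs : Convex ℝ s)
    (hf : ∀ t ∈ s, HasDerivWithinAt f (f' t) s t) (hf' : LipschitzOnWith K f' s)
    {a b : ℝ} (ha : a ∈ s) (hb : b ∈ s) :
    ‖f b - f a - (b - a) • f' a‖ ≤ K * |b - a| ^ 2 := by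
  have hsub : segment ℝ a b ⊆ s := hs.segment_subset ha hb
  have hbound : ∀ t ∈ segment ℝ a b,
      ‖ContinuousLinearMap.toSpanSingleton ℝ (f' t) -
        ContinuousLinearMap.toSpanSingleton ℝ (f' a)‖ ≤ K * |b - a| := fun t ht ↦ by
    have e : ContinuousLinearMap.toSpanSingleton ℝ (f' t) -
        ContinuousLinearMap.toSpanSingleton ℝ (f' a) =
        ContinuousLinearMap.toSpanSingleton ℝ (f' t - f' a) := by ext; simp
    rw [e, ContinuousLinearMap.norm_toSpanSingleton]
    refine (hf'.norm_sub_le (hsub ht) ha).trans ?_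
    gcongr
    simpa using norm_sub_le_of_mem_segment ht
  have := (convex_segment a b).norm_image_sub_le_of_norm_hasFDerivWithin_le'
    (fun t ht ↦ ((hf t (hsub ht)).mono hsub).hasFDerivWithinAt) hbound
    (left_mem_segment ℝ a b) (right_mem_segment ℝ a b)
  simpa [pow_two, mul_assoc] using this

lemma norm_sub_sub_sub_le_of_lipschitzOnWith_fderiv {f : E → F} {f' : E → E →L[ℝ] F} {s : Set E}
    {K L : ℝ≥0} (hs : Convex ℝ s) (hf : ∀ x ∈ s, HasFDerivWithinAt f (f' x) s x)
    (hK : ∀ x ∈ s, ‖f' x‖ ≤ K) (hL : LipschitzOnWith L f' s)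
    {x x' y y' : E} (hx : x ∈ s) (hx' : x' ∈ s) (hy : y ∈ s) (hy' : y' ∈ s) :
    ‖(f y' - f y) - (f x' - f x)‖ ≤
      K * ‖(y' - y) - (x' - x)‖ + L * (‖y - x‖ + ‖y' - x'‖) * ‖x' - x‖ := by
  have hmem : ∀ {a b : E}, a ∈ s → b ∈ s → MapsTo (AffineMap.lineMap a b) (Icc (0 : ℝ) 1) s :=
    fun ha hb _ ht ↦ hs.lineMap_mem ha hb ht
  have hderiv : ∀ {a b : E}, a ∈ s → b ∈ s → ∀ t ∈ Icc (0 : ℝ) 1,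
      HasDerivWithinAt (f ∘ AffineMap.lineMap a b) (f' (AffineMap.lineMap a b t) (b - a))
        (Icc 0 1) t := fun ha hb t ht ↦
    (hf _ (hmem ha hb ht)).comp_hasDerivWithinAt t AffineMap.hasDerivWithinAt_lineMap (hmem ha hb)
  have hdist : ∀ t ∈ Ico (0 : ℝ) 1,
      ‖AffineMap.lineMap y y' t - AffineMap.lineMap x x' t‖ ≤ ‖y - x‖ + ‖y' - x'‖ := fun t ht ↦ by
    have e : AffineMap.lineMap y y' t - AffineMap.lineMap x x' t =
        (1 - t) • (y - x) + t • (y' - x') := by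
      simp only [AffineMap.lineMap_apply_module]
      module
    rw [e]
    refine norm_add_le_of_le ?_ ?_ <;> rw [norm_smul] <;>
      refine mul_le_of_le_one_left (norm_nonneg _) (abs_le.2 ⟨?_, ?_⟩) <;> linarith [ht.1, ht.2]
  have key := norm_image_sub_le_of_norm_deriv_le_segment_01'
    (fun t ht ↦ (hderiv hy hy' t ht).sub (hderiv hx hx' t ht)) fun t ht ↦ by
      have hty := hmem hy hy' (Ico_subset_Icc_self ht)
      have htx := hmem hx hx' (Ico_subset_Icc_self ht)
      calc ‖f' (AffineMap.lineMap y y' t) (y' - y) - f' (AffineMap.lineMap x x' t) (x' - x)‖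
          = ‖f' (AffineMap.lineMap y y' t) ((y' - y) - (x' - x)) +
            (f' (AffineMap.lineMap y y' t) - f' (AffineMap.lineMap x x' t)) (x' - x)‖ := by
            congr 1
            simp only [map_sub, _root_.sub_apply]
            abel
        _ ≤ K * ‖(y' - y) - (x' - x)‖ + L * (‖y - x‖ + ‖y' - x'‖) * ‖x' - x‖ :=
            norm_add_le_of_le (ContinuousLinearMap.le_of_opNorm_le _ (hK _ hty) _)
              (ContinuousLinearMap.le_of_opNorm_le _
                ((hL.norm_sub_le hty htx).trans (by gcongr; exact hdist t ht)) _)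
  simpa [sub_sub_sub_comm] using key

end Calculus

lemma norm_smul_le_mul_of_nonneg {E : Type*} [SeminormedAddCommGroup E] [NormedSpace ℝ E] {c b : ℝ}
    {x : E} (hc : 0 ≤ c) (hx : ‖x‖ ≤ b) : ‖c • x‖ ≤ c * b := by
  rw [norm_smul, Real.norm_of_nonneg hc]
  gcongr

lemma norm_add_sub_le_of_lipschitzOnWith {F : Type*} [SeminormedAddCommGroup F] {f : ℝ → F}
    {K : ℝ≥0} {s : Set ℝ} {t h : ℝ} (hf : LipschitzOnWith K f s) (hh : 0 ≤ h) (ht : t ∈ s)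
    (hth : t + h ∈ s) : ‖f (t + h) - f t‖ ≤ K * h := by
  simpa [abs_of_nonneg hh] using hf.norm_sub_le hth ht

/-- The step estimate is only available below the threshold `δ`; the resulting bound keeps the
sequence there. -/
lemma le_mul_exp_of_le_mul_of_le {a : ℕ → ℝ} {L h T δ : ℝ} (hL : 0 ≤ L) (hh : 0 ≤ h)
    (ha : 0 ≤ a 0) (hδ : a 0 * Real.exp (L * T) ≤ δ)
    (hstep : ∀ k : ℕ, ((k + 1 : ℕ) : ℝ) * h ≤ T → a k ≤ δ → a (k + 1) ≤ a k * (1 + L * h)) :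
    ∀ k : ℕ, (k : ℝ) * h ≤ T → a k ≤ a 0 * Real.exp (L * (k * h)) := by
  intro k
  induction k with
  | zero => simp
  | succ k ih =>
    intro hk
    have hk' : (k : ℝ) * h ≤ T := le_trans (by gcongr; simp) hk
    have hak : a k ≤ δ := (ih hk').trans (le_trans (by gcongr) hδ)
    calc a (k + 1) ≤ a k * (1 + L * h) := hstep k hk hak
      _ ≤ a 0 * Real.exp (L * (k * h)) * Real.exp (L * h) := by
          gcongr
          · exact ih hk'
          · linarith [Real.add_one_le_exp (L * h)]
      _ = a 0 * Real.exp (L * ((k + 1 : ℕ) * h)) := by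
          rw [mul_assoc, ← Real.exp_add]
          push_cast
          ring_nf

section ReflectedEuler

variable {E : Type*} [NormedAddCommGroup E] [NormedSpace ℝ E]

/-- The reflection `1 - 2π` along the range of a projection `π`, defined for every continuous
linear map `π`. -/
noncomputable def projReflection (π : E →L[ℝ] E) : E →L[ℝ] E := 1 - (2 : ℝ) • π

lemma projReflection_apply (π : E →L[ℝ] E) (x : E) :
    projReflection π x = x - (2 : ℝ) • π x := rfl

lemma norm_projReflection_le (π : E →L[ℝ] E) : ‖projReflection π‖ ≤ 1 + 2 * ‖π‖ := by
  refine (norm_sub_le _ _).trans (add_le_add ContinuousLinearMap.norm_id_le ?_)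
  rw [norm_smul, Real.norm_two]

/-- The norm `‖(1 - π) x‖ + ‖π x‖` adapted to a projection `π`. Unlike `‖x‖`, it is invariant under
the reflection `1 - 2π`. -/
noncomputable def splitNorm (π : E →L[ℝ] E) (x : E) : ℝ := ‖x - π x‖ + ‖π x‖

lemma norm_le_splitNorm (π : E →L[ℝ] E) (x : E) : ‖x‖ ≤ splitNorm π x := by
  simpa [splitNorm] using norm_add_le (x - π x) (π x)

lemma splitNorm_nonneg (π : E →L[ℝ] E) (x : E) : 0 ≤ splitNorm π x :=
  (norm_nonneg x).trans (norm_le_splitNorm π x)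

lemma splitNorm_le (π : E →L[ℝ] E) (x : E) : splitNorm π x ≤ (1 + 2 * ‖π‖) * ‖x‖ := by
  have hx := π.le_opNorm x
  have hsub := norm_sub_le x (π x)
  rw [splitNorm]
  linarith

lemma splitNorm_add_le (π : E →L[ℝ] E) (x y : E) :
    splitNorm π (x + y) ≤ splitNorm π x + splitNorm π y := by
  have h₁ := norm_add_le (x - π x) (y - π y)
  have h₂ := norm_add_le (π x) (π y)
  rw [splitNorm, splitNorm, splitNorm, map_add, add_sub_add_comm]
  linarith

lemma splitNorm_projReflection {π : E →L[ℝ] E} (hπ : IsIdempotentElem π) (x : E) :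
    splitNorm π (projReflection π x) = splitNorm π x := by
  have hπx : π (π x) = π x := congr($hπ x)
  have hrange : π (projReflection π x) = -π x := by
    rw [projReflection_apply, map_sub, map_smul, hπx]
    module
  have hker : projReflection π x - π (projReflection π x) = x - π x := by
    rw [hrange, projReflection_apply]
    module
  rw [splitNorm, hker, hrange, norm_neg, splitNorm]

lemma splitNorm_le_add_opNorm_sub (π π' : E →L[ℝ] E) (x : E) :
    splitNorm π' x ≤ splitNorm π x + 2 * ‖π' - π‖ * ‖x‖ := by
  have hx := (π' - π).le_opNorm x
  have hker := norm_sub_le (x - π x) ((π' - π) x)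
  have hrange := norm_add_le (π x) ((π' - π) x)
  rw [_root_.sub_apply] at hx hker hrange
  rw [sub_sub, add_sub_cancel] at hker
  rw [add_sub_cancel] at hrange
  rw [splitNorm, splitNorm]
  linarith

/-- The momentum that the scheme tracks: the exact momentum `p` projected onto the kernel of `π`,
which is taken at the numerical position, plus half an impulse of the constraint force `F`. -/
noncomputable def shadowMomentum (π : E →L[ℝ] E) (h : ℝ) (p F : E) : E := p - π p + (h / 2) • F

variable {π π' π₀ π₁ : E →L[ℝ] E} {P p p₀ p₁ F F₀ F₁ f f₀ : E} {h : ℝ}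

lemma projReflection_sub_smul_sub (hπ : IsIdempotentElem π) (hp : π₀ p = 0) :
    projReflection π P - h • f - p =
      projReflection π (P - shadowMomentum π h p F) - (π - π₀) p +
        (h / 2) • projReflection π F - h • f := by
  have hπp : π (π p) = π p := congr($hπ p)
  simp only [projReflection_apply, shadowMomentum, map_add, map_sub, map_smul, hπp,
    _root_.sub_apply, hp]
  module

/-- The reflection fixes `p₀ - π p₀` and turns the half impulse around, up to `π - π₀`. What
remains is of second order in the step and the error, the change of the projection error
`π - π₀` over the step included. -/
lemma projReflection_sub_shadowMomentum (hπ : IsIdempotentElem π) (hp₀ : π₀ p₀ = 0)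
    (hp₁ : π₁ p₁ = 0) (hF₀ : π₀ F₀ = F₀) :
    projReflection π P - h • f - shadowMomentum π' h p₁ F₁ =
      projReflection π (P - shadowMomentum π h p₀ F₀) +
        (((π' - π) - (π₁ - π₀)) p₁ + (π - π₀) (p₁ - p₀) - (p₁ - p₀ - h • (-f₀ - F₀)) -
          (h / 2) • (F₁ - F₀) - h • (π - π₀) F₀ - h • (f - f₀)) := by
  have hπp : π (π p₀) = π p₀ := congr($hπ p₀)
  simp only [projReflection_apply, shadowMomentum, map_add, map_sub, map_smul, hπp,
    _root_.sub_apply, hp₀, hp₁, hF₀]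
  module

/-- `(q, p)` solves `q' = W p`, `p' = -g(q) - F` on `[0, T]`, where the momentum lies in the kernel
of the projection `A (q t)` and the constraint force `F` in its range. -/
structure IsConstrainedMotion (W : E →L[ℝ] E) (A : E → E →L[ℝ] E) (g : E → E) (F : ℝ → E) (T : ℝ)
    (q p : ℝ → E) : Prop where
  hasDerivWithinAt_position : ∀ t ∈ Icc 0 T, HasDerivWithinAt q (W (p t)) (Icc 0 T) t
  hasDerivWithinAt_momentum : ∀ t ∈ Icc 0 T, HasDerivWithinAt p (-g (q t) - F t) (Icc 0 T) t
  constraint : ∀ t ∈ Icc 0 T, A (q t) (p t) = 0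
  force_mem_range : ∀ t ∈ Icc 0 T, A (q t) (F t) = F t

/-- One step `(Q₀, P₀) ↦ (Q₁, P₁)` of the reflected Euler scheme with step size `h`. -/
structure IsReflectedEulerStep (W : E →L[ℝ] E) (A : E → E →L[ℝ] E) (g : E → E) (h : ℝ)
    (Q₀ P₀ Q₁ P₁ : E) : Prop where
  momentum_eq : P₁ = projReflection (A Q₀) P₀ - h • g Q₀
  position_eq : Q₁ = Q₀ + h • W P₁

/-- The bounds on the data of the scheme and on a solution that enter the error analysis, with a
common constant `C`, on a set `s` of positions that contains a neighbourhood of the solution. -/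
structure SchemeBounds (W : E →L[ℝ] E) (A : E → E →L[ℝ] E) (g : E → E) (F : ℝ → E) (T : ℝ)
    (q p : ℝ → E) (C : ℝ≥0) (s : Set E) : Prop where
  one_le : 1 ≤ C
  closedBall_subset : ∀ t ∈ Icc 0 T, Metric.closedBall (q t) 2 ⊆ s
  norm_invMass_le : ‖W‖ ≤ C
  norm_proj_le : ∀ x ∈ s, ‖A x‖ ≤ C
  norm_grad_le : ∀ x ∈ s, ‖g x‖ ≤ C
  norm_momentum_le : ∀ t ∈ Icc 0 T, ‖p t‖ ≤ C
  norm_force_le : ∀ t ∈ Icc 0 T, ‖F t‖ ≤ C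
  lipschitz_proj : LipschitzOnWith C A s
  lipschitz_grad : LipschitzOnWith C g s
  lipschitz_position : LipschitzOnWith C q (Icc 0 T)
  lipschitz_momentum : LipschitzOnWith C p (Icc 0 T)
  lipschitz_force : LipschitzOnWith C F (Icc 0 T)
  secondDiff_proj : ∀ x ∈ s, ∀ x' ∈ s, ∀ y ∈ s, ∀ y' ∈ s,
    ‖(A y' - A y) - (A x' - A x)‖ ≤
      C * ‖(y' - y) - (x' - x)‖ + C * (‖y - x‖ + ‖y' - x'‖) * ‖x' - x‖
  taylor_position : ∀ a ∈ Icc 0 T, ∀ b ∈ Icc 0 T,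
    ‖q b - q a - (b - a) • W (p a)‖ ≤ C * |b - a| ^ 2
  taylor_momentum : ∀ a ∈ Icc 0 T, ∀ b ∈ Icc 0 T,
    ‖p b - p a - (b - a) • (-g (q a) - F a)‖ ≤ C * |b - a| ^ 2

/-- The error of `(Q, P)` against the solution at time `t`, with the step size `h` added so that a
step multiplies it by at most `1 + O(h)`. -/
noncomputable def schemeError (A : E → E →L[ℝ] E) (F q p : ℝ → E) (h t : ℝ) (Q P : E) : ℝ :=
  splitNorm (A Q) (P - shadowMomentum (A Q) h (p t) (F t)) + ‖Q - q t‖ + h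

section SchemeError

variable (A : E → E →L[ℝ] E) (F q p : ℝ → E) {h : ℝ} (t : ℝ) (Q P : E)

lemma norm_sub_shadowMomentum_le_schemeError (hh : 0 ≤ h) :
    ‖P - shadowMomentum (A Q) h (p t) (F t)‖ ≤ schemeError A F q p h t Q P := by
  have hle := norm_le_splitNorm (A Q) (P - shadowMomentum (A Q) h (p t) (F t))
  have hpos := norm_nonneg (Q - q t)
  rw [schemeError]
  linarith

lemma norm_position_sub_le_schemeError (hh : 0 ≤ h) :
    ‖Q - q t‖ ≤ schemeError A F q p h t Q P := by
  have hmom := splitNorm_nonneg (A Q) (P - shadowMomentum (A Q) h (p t) (F t))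
  rw [schemeError]
  linarith

lemma le_schemeError : h ≤ schemeError A F q p h t Q P :=
  le_add_of_nonneg_left (add_nonneg (splitNorm_nonneg _ _) (norm_nonneg _))

end SchemeError

namespace SchemeBounds

variable {W : E →L[ℝ] E} {A : E → E →L[ℝ] E} {g : E → E} {F q p : ℝ → E} {T t h : ℝ} {C : ℝ≥0}
  {s : Set E} {Q P Q₀ P₀ Q₁ P₁ x : E}

lemma position_mem (hB : SchemeBounds W A g F T q p C s) (ht : t ∈ Icc 0 T) : q t ∈ s :=
  hB.closedBall_subset t ht (Metric.mem_closedBall_self zero_le_two)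

lemma one_le_coe (hB : SchemeBounds W A g F T q p C s) : (1 : ℝ) ≤ C := mod_cast hB.one_le

lemma norm_projReflection_apply_le (hB : SchemeBounds W A g F T q p C s) (hQ : Q ∈ s) {r : ℝ}
    (hx : ‖x‖ ≤ r) : ‖projReflection (A Q) x‖ ≤ 3 * C * r := by
  refine (ContinuousLinearMap.le_of_opNorm_le _ ((norm_projReflection_le _).trans ?_) x).trans
    (by gcongr)
  linarith [hB.norm_proj_le Q hQ, hB.one_le_coe]

lemma norm_proj_sub_apply_le (hB : SchemeBounds W A g F T q p C s) (hh : 0 ≤ h) (hQ : Q ∈ s)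
    (ht : t ∈ Icc 0 T) {r : ℝ} (hx : ‖x‖ ≤ r) :
    ‖(A Q - A (q t)) x‖ ≤ C * schemeError A F q p h t Q P * r := by
  have hX := hh.trans (le_schemeError A F q p t Q P)
  refine (ContinuousLinearMap.le_of_opNorm_le _
    (hB.lipschitz_proj.norm_sub_le hQ (hB.position_mem ht)) x).trans ?_
  gcongr
  exact norm_position_sub_le_schemeError A F q p t Q P hh

lemma norm_momentum_sub_le (hB : SchemeBounds W A g F T q p C s)
    (hm : IsConstrainedMotion W A g F T q p) (hA : IsIdempotentElem (A Q₀))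
    (hstep : IsReflectedEulerStep W A g h Q₀ P₀ Q₁ P₁) (hh : 0 ≤ h) (ht : t ∈ Icc 0 T)
    (hQ₀ : Q₀ ∈ s) : ‖P₁ - p t‖ ≤ 7 * C ^ 2 * schemeError A F q p h t Q₀ P₀ := by
  have hC := hB.one_le_coe
  have hε := norm_sub_shadowMomentum_le_schemeError A F q p t Q₀ P₀ hh
  have hproj := hB.norm_proj_sub_apply_le (P := P₀) hh hQ₀ ht (hB.norm_momentum_le t ht)
  have hhX := le_schemeError A F q p (h := h) t Q₀ P₀
  rw [hstep.momentum_eq, projReflection_sub_smul_sub hA (hm.constraint t ht) (F := F t)]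
  set X := schemeError A F q p h t Q₀ P₀
  have hX : 0 ≤ X := hh.trans hhX
  have hforce := norm_smul_le_mul_of_nonneg (div_nonneg hh zero_le_two)
    (hB.norm_projReflection_apply_le hQ₀ (hB.norm_force_le t ht))
  have hgrad := norm_smul_le_mul_of_nonneg hh (hB.norm_grad_le Q₀ hQ₀)
  calc _ ≤ 3 * C * X + C * X * C + h / 2 * (3 * C * C) + h * C :=
        norm_sub_le_of_le (norm_add_le_of_le
          (norm_sub_le_of_le (hB.norm_projReflection_apply_le hQ₀ hε) hproj) hforce) hgrad
    _ ≤ 3 * C ^ 2 * X + C * X * C + X / 2 * (3 * C * C) + X * C ^ 2 := by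
        gcongr <;> exact le_self_pow₀ hC two_ne_zero
    _ ≤ 7 * C ^ 2 * X := by nlinarith [mul_nonneg (sq_nonneg (C : ℝ)) hX]

lemma norm_position_step_sub_le (hB : SchemeBounds W A g F T q p C s)
    (hm : IsConstrainedMotion W A g F T q p) (hA : IsIdempotentElem (A Q₀))
    (hstep : IsReflectedEulerStep W A g h Q₀ P₀ Q₁ P₁) (hh : 0 ≤ h) (ht : t ∈ Icc 0 T)
    (hth : t + h ∈ Icc 0 T) (hQ₀ : Q₀ ∈ s) :
    ‖(Q₁ - Q₀) - (q (t + h) - q t)‖ ≤ 8 * C ^ 3 * h * schemeError A F q p h t Q₀ P₀ := by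
  have hC := hB.one_le_coe
  have hP := hB.norm_momentum_sub_le hm hA hstep hh ht hQ₀
  have hhX := le_schemeError A F q p (h := h) t Q₀ P₀
  set X := schemeError A F q p h t Q₀ P₀
  have hvel : ‖h • W (P₁ - p t)‖ ≤ h * (C * (7 * C ^ 2 * X)) :=
    norm_smul_le_mul_of_nonneg hh ((W.le_of_opNorm_le hB.norm_invMass_le _).trans (by gcongr))
  have htaylor : ‖q (t + h) - q t - h • W (p t)‖ ≤ C ^ 3 * h * X := by
    calc _ ≤ C * h ^ 2 := by simpa using hB.taylor_position t ht (t + h) hth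
      _ = C * h * h := by ring
      _ ≤ C ^ 3 * h * X := by gcongr; exact le_self_pow₀ hC three_ne_zero
  calc ‖(Q₁ - Q₀) - (q (t + h) - q t)‖
      = ‖h • W (P₁ - p t) - (q (t + h) - q t - h • W (p t))‖ := by
        rw [hstep.position_eq, map_sub]
        congr 1
        module
    _ ≤ h * (C * (7 * C ^ 2 * X)) + C ^ 3 * h * X := norm_sub_le_of_le hvel htaylor
    _ = 8 * C ^ 3 * h * X := by ring

lemma norm_proj_step_sub_le (hB : SchemeBounds W A g F T q p C s)
    (hm : IsConstrainedMotion W A g F T q p) (hA : IsIdempotentElem (A Q₀))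
    (hstep : IsReflectedEulerStep W A g h Q₀ P₀ Q₁ P₁) (hh : 0 ≤ h) (hh1 : h ≤ 1)
    (ht : t ∈ Icc 0 T) (hth : t + h ∈ Icc 0 T) (hQ₀ : Q₀ ∈ s) (hQ₁ : Q₁ ∈ s) :
    ‖(A Q₁ - A Q₀) - (A (q (t + h)) - A (q t))‖ ≤
      18 * C ^ 5 * h * schemeError A F q p h t Q₀ P₀ := by
  have hC := hB.one_le_coe
  have hΔ := hB.norm_position_step_sub_le hm hA hstep hh ht hth hQ₀
  have hd := norm_position_sub_le_schemeError A F q p t Q₀ P₀ hh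
  have hq := norm_add_sub_le_of_lipschitzOnWith hB.lipschitz_position hh ht hth
  set X := schemeError A F q p h t Q₀ P₀
  have hX : 0 ≤ X := (norm_nonneg _).trans hd
  have hd₀ : ‖Q₀ - q t‖ ≤ C ^ 3 * X := hd.trans (le_mul_of_one_le_left hX (one_le_pow₀ hC))
  have hd₁ : ‖Q₁ - q (t + h)‖ ≤ 9 * C ^ 3 * X := by
    calc ‖Q₁ - q (t + h)‖ = ‖((Q₁ - Q₀) - (q (t + h) - q t)) + (Q₀ - q t)‖ := by congr 1; abel
      _ ≤ 8 * C ^ 3 * 1 * X + C ^ 3 * X := norm_add_le_of_le (hΔ.trans (by gcongr)) hd₀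
      _ = 9 * C ^ 3 * X := by ring
  calc ‖(A Q₁ - A Q₀) - (A (q (t + h)) - A (q t))‖
      ≤ C * ‖(Q₁ - Q₀) - (q (t + h) - q t)‖ +
        C * (‖Q₀ - q t‖ + ‖Q₁ - q (t + h)‖) * ‖q (t + h) - q t‖ :=
        hB.secondDiff_proj _ (hB.position_mem ht) _ (hB.position_mem hth) _ hQ₀ _ hQ₁
    _ ≤ C * (8 * C ^ 3 * h * X) + C * (C ^ 3 * X + 9 * C ^ 3 * X) * (C * h) := by gcongr
    _ = 8 * C ^ 4 * h * X + 10 * C ^ 5 * h * X := by ring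
    _ ≤ 8 * C ^ 5 * h * X + 10 * C ^ 5 * h * X := by gcongr; norm_num
    _ = 18 * C ^ 5 * h * X := by ring

lemma norm_shadowMomentum_defect_le (hB : SchemeBounds W A g F T q p C s)
    (hm : IsConstrainedMotion W A g F T q p) (hA : IsIdempotentElem (A Q₀))
    (hstep : IsReflectedEulerStep W A g h Q₀ P₀ Q₁ P₁) (hh : 0 ≤ h) (hh1 : h ≤ 1)
    (ht : t ∈ Icc 0 T) (hth : t + h ∈ Icc 0 T) (hQ₀ : Q₀ ∈ s) (hQ₁ : Q₁ ∈ s) :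
    ‖P₁ - shadowMomentum (A Q₁) h (p (t + h)) (F (t + h)) -
        projReflection (A Q₀) (P₀ - shadowMomentum (A Q₀) h (p t) (F t))‖ ≤
      23 * C ^ 6 * h * schemeError A F q p h t Q₀ P₀ := by
  have hC := hB.one_le_coe
  have hsecond := ContinuousLinearMap.le_of_opNorm_le_of_le _
    (hB.norm_proj_step_sub_le hm hA hstep hh hh1 ht hth hQ₀ hQ₁) (hB.norm_momentum_le _ hth)
  have hproj := hB.norm_proj_sub_apply_le (P := P₀) hh hQ₀ ht
    (norm_add_sub_le_of_lipschitzOnWith hB.lipschitz_momentum hh ht hth)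
  have htaylor : ‖p (t + h) - p t - h • (-g (q t) - F t)‖ ≤ C * h ^ 2 := by
    simpa using hB.taylor_momentum t ht (t + h) hth
  have himpulse := norm_smul_le_mul_of_nonneg (div_nonneg hh zero_le_two)
    (norm_add_sub_le_of_lipschitzOnWith hB.lipschitz_force hh ht hth)
  have hforce := norm_smul_le_mul_of_nonneg hh
    (hB.norm_proj_sub_apply_le (P := P₀) hh hQ₀ ht (hB.norm_force_le t ht))
  have hgrad := norm_smul_le_mul_of_nonneg hh
    (hB.lipschitz_grad.norm_sub_le hQ₀ (hB.position_mem ht))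
  have hd := norm_position_sub_le_schemeError A F q p t Q₀ P₀ hh
  have hhX := le_schemeError A F q p (h := h) t Q₀ P₀
  rw [hstep.momentum_eq, projReflection_sub_shadowMomentum hA (hm.constraint t ht)
    (hm.constraint _ hth) (hm.force_mem_range t ht) (f₀ := g (q t)), add_sub_cancel_left]
  set X := schemeError A F q p h t Q₀ P₀
  have hX : 0 ≤ X := hh.trans hhX
  have hpow : ∀ j ≤ 6, C ^ j * (h * X) ≤ C ^ 6 * (h * X) := fun j hj ↦ by gcongr
  refine (norm_sub_le_of_le (norm_sub_le_of_le (norm_sub_le_of_le (norm_sub_le_of_le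
    (norm_add_le_of_le hsecond hproj) htaylor) himpulse) hforce) hgrad).trans ?_
  calc 18 * C ^ 5 * h * X * C + C * X * (C * h) + C * h ^ 2 + h / 2 * (C * h) +
        h * (C * X * C) + h * (C * ‖Q₀ - q t‖)
      = 18 * (C ^ 6 * (h * X)) + 2 * (C ^ 2 * (h * X)) + C ^ 1 * (h * h) +
        C ^ 1 * (h * h) / 2 + C ^ 1 * (h * ‖Q₀ - q t‖) := by ring
    _ ≤ 18 * (C ^ 6 * (h * X)) + 2 * (C ^ 2 * (h * X)) + C ^ 1 * (h * X) +
        C ^ 1 * (h * X) + C ^ 1 * (h * X) := by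
        gcongr
        exact (half_le_self (by positivity)).trans (by gcongr)
    _ ≤ 18 * (C ^ 6 * (h * X)) + 2 * (C ^ 6 * (h * X)) + C ^ 6 * (h * X) +
        C ^ 6 * (h * X) + C ^ 6 * (h * X) := by
        linarith [hpow 2 (by norm_num), hpow 1 (by norm_num)]
    _ = 23 * C ^ 6 * h * X := by ring

lemma splitNorm_sub_shadowMomentum_le (hB : SchemeBounds W A g F T q p C s)
    (hm : IsConstrainedMotion W A g F T q p) (hA : IsIdempotentElem (A Q₀))
    (hstep : IsReflectedEulerStep W A g h Q₀ P₀ Q₁ P₁) (hh : 0 ≤ h) (hh1 : h ≤ 1)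
    (ht : t ∈ Icc 0 T) (hth : t + h ∈ Icc 0 T) (hQ₀ : Q₀ ∈ s) (hQ₁ : Q₁ ∈ s)
    (hΔ : ‖Q₁ - Q₀‖ ≤ 8 * C ^ 3 * h) :
    splitNorm (A Q₁) (P₁ - shadowMomentum (A Q₁) h (p (t + h)) (F (t + h))) ≤
      splitNorm (A Q₀) (P₀ - shadowMomentum (A Q₀) h (p t) (F t)) +
        485 * C ^ 10 * h * schemeError A F q p h t Q₀ P₀ := by
  have hC := hB.one_le_coe
  have hdefect := hB.norm_shadowMomentum_defect_le hm hA hstep hh hh1 ht hth hQ₀ hQ₁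
  have hε₀ := norm_sub_shadowMomentum_le_schemeError A F q p t Q₀ P₀ hh
  set X := schemeError A F q p h t Q₀ P₀
  have hX : 0 ≤ X := (norm_nonneg _).trans hε₀
  set ε₀ := P₀ - shadowMomentum (A Q₀) h (p t) (F t)
  set ε₁ := P₁ - shadowMomentum (A Q₁) h (p (t + h)) (F (t + h))
  set r := ε₁ - projReflection (A Q₀) ε₀ with hr
  have hε₁ : ‖ε₁‖ ≤ 26 * C ^ 6 * X := by
    calc ‖ε₁‖ = ‖r + projReflection (A Q₀) ε₀‖ := by rw [hr, sub_add_cancel]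
      _ ≤ 23 * C ^ 6 * 1 * X + 3 * C ^ 6 * X :=
          norm_add_le_of_le (hdefect.trans (by gcongr))
            ((hB.norm_projReflection_apply_le hQ₀ hε₀).trans
              (by gcongr; exact le_self_pow₀ hC (by norm_num)))
      _ = 26 * C ^ 6 * X := by ring
  have hold : splitNorm (A Q₀) ε₁ ≤ splitNorm (A Q₀) ε₀ + 69 * C ^ 7 * h * X := by
    calc splitNorm (A Q₀) ε₁ = splitNorm (A Q₀) (projReflection (A Q₀) ε₀ + r) := by
          rw [hr, add_sub_cancel]
      _ ≤ splitNorm (A Q₀) ε₀ + splitNorm (A Q₀) r := by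
          simpa only [splitNorm_projReflection hA] using
            splitNorm_add_le (A Q₀) (projReflection (A Q₀) ε₀) r
      _ ≤ splitNorm (A Q₀) ε₀ + 3 * C * (23 * C ^ 6 * h * X) := by
          gcongr
          refine (splitNorm_le _ _).trans ?_
          gcongr
          linarith [hB.norm_proj_le Q₀ hQ₀]
      _ = splitNorm (A Q₀) ε₀ + 69 * C ^ 7 * h * X := by ring
  calc splitNorm (A Q₁) ε₁ ≤ splitNorm (A Q₀) ε₁ + 2 * ‖A Q₁ - A Q₀‖ * ‖ε₁‖ :=
        splitNorm_le_add_opNorm_sub _ _ _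
    _ ≤ splitNorm (A Q₀) ε₀ + 69 * C ^ 7 * h * X +
          2 * (C * (8 * C ^ 3 * h)) * (26 * C ^ 6 * X) := by
        gcongr
        exact (hB.lipschitz_proj.norm_sub_le hQ₁ hQ₀).trans (by gcongr)
    _ ≤ splitNorm (A Q₀) ε₀ + 69 * C ^ 10 * h * X +
          2 * (C * (8 * C ^ 3 * h)) * (26 * C ^ 6 * X) := by gcongr; norm_num
    _ = splitNorm (A Q₀) ε₀ + 485 * C ^ 10 * h * X := by ring

lemma mem_of_schemeError_le_one (hB : SchemeBounds W A g F T q p C s) (hh : 0 ≤ h)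
    (ht : t ∈ Icc 0 T) (hX : schemeError A F q p h t Q P ≤ 1) : Q ∈ s :=
  hB.closedBall_subset t ht <| mem_closedBall_iff_norm.2 <|
    (norm_position_sub_le_schemeError A F q p t Q P hh).trans (hX.trans one_le_two)

lemma norm_position_step_le (hB : SchemeBounds W A g F T q p C s)
    (hm : IsConstrainedMotion W A g F T q p) (hA : IsIdempotentElem (A Q₀))
    (hstep : IsReflectedEulerStep W A g h Q₀ P₀ Q₁ P₁) (hh : 0 ≤ h) (ht : t ∈ Icc 0 T)
    (hX : schemeError A F q p h t Q₀ P₀ ≤ 1) : ‖Q₁ - Q₀‖ ≤ 8 * C ^ 3 * h := by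
  have hC := hB.one_le_coe
  have hP := hB.norm_momentum_sub_le hm hA hstep hh ht (hB.mem_of_schemeError_le_one hh ht hX)
  have hP₁ : ‖P₁‖ ≤ 8 * C ^ 2 := by
    calc ‖P₁‖ = ‖(P₁ - p t) + p t‖ := by rw [sub_add_cancel]
      _ ≤ 7 * C ^ 2 * 1 + C ^ 2 := norm_add_le_of_le (hP.trans (by gcongr))
          ((hB.norm_momentum_le t ht).trans (le_self_pow₀ hC two_ne_zero))
      _ = 8 * C ^ 2 := by ring
  calc ‖Q₁ - Q₀‖ = ‖h • W P₁‖ := by rw [hstep.position_eq, add_sub_cancel_left]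
    _ ≤ h * (C * (8 * C ^ 2)) := norm_smul_le_mul_of_nonneg hh
        (W.le_of_opNorm_le_of_le hB.norm_invMass_le hP₁)
    _ = 8 * C ^ 3 * h := by ring

lemma schemeError_step_le (hB : SchemeBounds W A g F T q p C s)
    (hm : IsConstrainedMotion W A g F T q p) (hA : IsIdempotentElem (A Q₀))
    (hstep : IsReflectedEulerStep W A g h Q₀ P₀ Q₁ P₁) (hh : 0 ≤ h) (hCh : 8 * C ^ 3 * h ≤ 1)
    (ht : t ∈ Icc 0 T) (hth : t + h ∈ Icc 0 T) (hX : schemeError A F q p h t Q₀ P₀ ≤ 1) :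
    schemeError A F q p h (t + h) Q₁ P₁ ≤
      schemeError A F q p h t Q₀ P₀ * (1 + 500 * C ^ 10 * h) := by
  have hC := hB.one_le_coe
  have hC3 : (1 : ℝ) ≤ C ^ 3 := one_le_pow₀ hC
  have hQ₀ := hB.mem_of_schemeError_le_one hh ht hX
  have hΔ := hB.norm_position_step_le hm hA hstep hh ht hX
  have hd := (norm_position_sub_le_schemeError A F q p t Q₀ P₀ hh).trans hX
  have hQ₁ : Q₁ ∈ s := hB.closedBall_subset t ht <| mem_closedBall_iff_norm.2 <| by
    linarith [norm_sub_le_norm_sub_add_norm_sub Q₁ Q₀ (q t)]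
  have hsplit := hB.splitNorm_sub_shadowMomentum_le hm hA hstep hh (by nlinarith) ht hth hQ₀ hQ₁ hΔ
  have hpos := norm_add_le ((Q₁ - Q₀) - (q (t + h) - q t)) (Q₀ - q t)
  rw [show (Q₁ - Q₀) - (q (t + h) - q t) + (Q₀ - q t) = Q₁ - q (t + h) by abel] at hpos
  have hstep' := hB.norm_position_step_sub_le hm hA hstep hh ht hth hQ₀
  have hX₀ : 0 ≤ schemeError A F q p h t Q₀ P₀ := hh.trans (le_schemeError A F q p t Q₀ P₀)
  have hpow : 8 * C ^ 3 * h * schemeError A F q p h t Q₀ P₀ ≤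
      15 * C ^ 10 * h * schemeError A F q p h t Q₀ P₀ := by
    gcongr <;> norm_num
  calc schemeError A F q p h (t + h) Q₁ P₁
      ≤ schemeError A F q p h t Q₀ P₀ + 485 * C ^ 10 * h * schemeError A F q p h t Q₀ P₀ +
        15 * C ^ 10 * h * schemeError A F q p h t Q₀ P₀ := by
        rw [schemeError, schemeError] at *
        linarith
    _ = schemeError A F q p h t Q₀ P₀ * (1 + 500 * C ^ 10 * h) := by ring

lemma schemeError_zero_le (hB : SchemeBounds W A g F T q p C s)
    (hm : IsConstrainedMotion W A g F T q p) (hh : 0 ≤ h) (hT : 0 ≤ T) :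
    schemeError A F q p h 0 (q 0) (p 0) ≤ 4 * C ^ 2 * h := by
  have h0 : (0 : ℝ) ∈ Icc 0 T := left_mem_Icc.2 hT
  have hC := hB.one_le_coe
  have hF : ‖(h / 2) • F 0‖ ≤ h / 2 * C :=
    norm_smul_le_mul_of_nonneg (by positivity) (hB.norm_force_le 0 h0)
  have hA : 1 + 2 * ‖A (q 0)‖ ≤ 3 * C := by
    linarith [hB.norm_proj_le _ (hB.position_mem h0)]
  calc schemeError A F q p h 0 (q 0) (p 0) = splitNorm (A (q 0)) (-((h / 2) • F 0)) + h := by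
        simp [schemeError, shadowMomentum, hm.constraint 0 h0]
    _ ≤ 3 * C * (h / 2 * C) + h := by
        gcongr
        exact (splitNorm_le _ _).trans (by rw [norm_neg]; gcongr)
    _ ≤ 4 * C ^ 2 * h := by nlinarith [one_le_pow₀ hC (n := 2)]

lemma norm_position_sub_le (hB : SchemeBounds W A g F T q p C s)
    (hm : IsConstrainedMotion W A g F T q p) (hA : ∀ x, IsIdempotentElem (A x)) (hh : 0 ≤ h)
    (hCh : 8 * C ^ 3 * h ≤ 1) (hδ : 4 * C ^ 2 * Real.exp (500 * C ^ 10 * T) * h ≤ 1) {Q P : ℕ → E}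
    (hQ0 : Q 0 = q 0) (hP0 : P 0 = p 0)
    (hstep : ∀ k, IsReflectedEulerStep W A g h (Q k) (P k) (Q (k + 1)) (P (k + 1)))
    {k : ℕ} (hk : k * h ≤ T) :
    ‖Q k - q (k * h)‖ ≤ 4 * C ^ 2 * Real.exp (500 * C ^ 10 * T) * h := by
  have hT : 0 ≤ T := le_trans (by positivity) hk
  have hX : ∀ j : ℕ, 0 ≤ schemeError A F q p h (j * h) (Q j) (P j) := fun j ↦
    hh.trans (le_schemeError ..)
  have hX0 : schemeError A F q p h ((0 : ℕ) * h) (Q 0) (P 0) * Real.exp (500 * C ^ 10 * T) ≤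
      4 * C ^ 2 * Real.exp (500 * C ^ 10 * T) * h := by
    calc _ ≤ 4 * C ^ 2 * h * Real.exp (500 * C ^ 10 * T) := by
          rw [hQ0, hP0, Nat.cast_zero, zero_mul]
          gcongr
          exact hB.schemeError_zero_le hm hh hT
      _ = 4 * C ^ 2 * Real.exp (500 * C ^ 10 * T) * h := mul_right_comm ..
  have hgrow := le_mul_exp_of_le_mul_of_le (a := fun j ↦ schemeError A F q p h (j * h) (Q j) (P j))
    (L := 500 * C ^ 10) (T := T) (by positivity) hh (hX 0) (hX0.trans hδ) (fun j hj hXj ↦ by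
      rw [Nat.cast_succ, add_one_mul] at hj ⊢
      exact hB.schemeError_step_le hm (hA _) (hstep j) hh hCh
        ⟨by positivity, (le_add_of_nonneg_right hh).trans hj⟩ ⟨by positivity, hj⟩ hXj) k hk
  calc ‖Q k - q (k * h)‖ ≤ _ := norm_position_sub_le_schemeError A F q p _ _ (P k) hh
    _ ≤ _ := hgrow
    _ ≤ _ := by gcongr; exact hX 0
    _ ≤ _ := hX0

end SchemeBounds

namespace IsConstrainedMotion

variable {W : E →L[ℝ] E} {A : E → E →L[ℝ] E} {g : E → E} {F q p : ℝ → E} {T : ℝ}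

lemma continuousOn_position (hm : IsConstrainedMotion W A g F T q p) : ContinuousOn q (Icc 0 T) :=
  fun t ht ↦ (hm.hasDerivWithinAt_position t ht).continuousWithinAt

lemma continuousOn_momentum (hm : IsConstrainedMotion W A g F T q p) : ContinuousOn p (Icc 0 T) :=
  fun t ht ↦ (hm.hasDerivWithinAt_momentum t ht).continuousWithinAt

lemma exists_lipschitzOnWith_position (hm : IsConstrainedMotion W A g F T q p) :
    ∃ K, LipschitzOnWith K q (Icc 0 T) :=
  exists_lipschitzOnWith_of_hasDerivWithinAt (convex_Icc 0 T) isCompact_Icc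
    hm.hasDerivWithinAt_position (W.continuous.comp_continuousOn hm.continuousOn_momentum)

lemma exists_lipschitzOnWith_momentum (hm : IsConstrainedMotion W A g F T q p) (hg : Continuous g)
    (hF : ContinuousOn F (Icc 0 T)) : ∃ K, LipschitzOnWith K p (Icc 0 T) :=
  exists_lipschitzOnWith_of_hasDerivWithinAt (convex_Icc 0 T) isCompact_Icc
    hm.hasDerivWithinAt_momentum ((hg.comp_continuousOn hm.continuousOn_position).neg.sub hF)

end IsConstrainedMotion

lemma exists_schemeBounds [ProperSpace E] {W : E →L[ℝ] E} {A : E → E →L[ℝ] E} (hA : ContDiff ℝ 2 A)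
    {g : E → E} (hg : ContDiff ℝ 1 g) {F q p : ℝ → E} {T : ℝ} {K : ℝ≥0}
    (hF : LipschitzOnWith K F (Icc 0 T)) (hm : IsConstrainedMotion W A g F T q p) :
    ∃ C s, SchemeBounds W A g F T q p C s := by
  have hI : IsCompact (Icc 0 T) := isCompact_Icc
  obtain ⟨B, hB⟩ := (eventually_norm_le_of_continuousOn hI hm.continuousOn_position).exists
  set s := Metric.closedBall (0 : E) (B + 2)
  have hs : Convex ℝ s := convex_closedBall _ _
  have hs' : IsCompact s := isCompact_closedBall _ _
  have closedBall_subset : ∀ t ∈ Icc 0 T, Metric.closedBall (q t) 2 ⊆ s := fun t ht ↦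
    Metric.closedBall_subset_closedBall' (by rw [dist_zero_right]; linarith [hB t ht])
  have hqs : MapsTo q (Icc 0 T) s := fun t ht ↦
    closedBall_subset t ht (Metric.mem_closedBall_self zero_le_two)
  have hA' : ContDiff ℝ 1 (fderiv ℝ A) := hA.fderiv_right (by norm_num)
  obtain ⟨LA, hLA⟩ := (hA.of_le one_le_two).contDiffOn.exists_lipschitzOnWith one_ne_zero hs hs'
  obtain ⟨LA', hLA'⟩ := hA'.contDiffOn.exists_lipschitzOnWith one_ne_zero hs hs'
  obtain ⟨Lg, hLg⟩ := hg.contDiffOn.exists_lipschitzOnWith one_ne_zero hs hs'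
  obtain ⟨Lq, hLq⟩ := hm.exists_lipschitzOnWith_position
  obtain ⟨Lp, hLp⟩ := hm.exists_lipschitzOnWith_momentum hg.continuous hF.continuousOn
  suffices ∀ᶠ C in atTop, SchemeBounds W A g F T q p C s from this.exists.imp fun C hC ↦ ⟨s, hC⟩
  filter_upwards [eventually_ge_atTop 1, eventually_ge_atTop ‖W‖₊,
    eventually_norm_le_of_continuousOn hs' hA.continuous.continuousOn,
    eventually_norm_le_of_continuousOn hs' hA'.continuous.continuousOn,
    eventually_norm_le_of_continuousOn hs' hg.continuous.continuousOn,
    eventually_norm_le_of_continuousOn hI hm.continuousOn_momentum,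
    eventually_norm_le_of_continuousOn hI hF.continuousOn, eventually_lipschitzOnWith hLA,
    eventually_lipschitzOnWith hLA', eventually_lipschitzOnWith hLg,
    eventually_lipschitzOnWith hLq, eventually_lipschitzOnWith hLp, eventually_lipschitzOnWith hF,
    eventually_lipschitzOnWith (W.lipschitz.comp_lipschitzOnWith hLp),
    eventually_lipschitzOnWith ((hLg.comp hLq hqs).neg.sub hF)]
    with C one_le norm_invMass_le norm_proj_le norm_fderiv_le norm_grad_le norm_momentum_le
      norm_force_le lipschitz_proj lipschitz_fderiv lipschitz_grad lipschitz_position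
      lipschitz_momentum lipschitz_force lipschitz_velocity lipschitz_acceleration
  exact {
    one_le, closedBall_subset, norm_invMass_le, norm_proj_le, norm_grad_le, norm_momentum_le,
    norm_force_le, lipschitz_proj, lipschitz_grad, lipschitz_position, lipschitz_momentum,
    lipschitz_force
    secondDiff_proj := fun _ hx _ hx' _ hy _ hy' ↦
      norm_sub_sub_sub_le_of_lipschitzOnWith_fderiv hs
        (fun x _ ↦ (hA.differentiable two_ne_zero x).hasFDerivAt.hasFDerivWithinAt)
        norm_fderiv_le lipschitz_fderiv hx hx' hy hy'
    taylor_position := fun _ ha _ hb ↦ norm_sub_sub_smul_deriv_le (convex_Icc 0 T)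
      hm.hasDerivWithinAt_position lipschitz_velocity ha hb
    taylor_momentum := fun _ ha _ hb ↦ norm_sub_sub_smul_deriv_le (convex_Icc 0 T)
      hm.hasDerivWithinAt_momentum lipschitz_acceleration ha hb }

theorem exists_reflectedEuler_firstOrder_bound [ProperSpace E] {W : E →L[ℝ] E}
    {A : E → E →L[ℝ] E} (hA : ContDiff ℝ 2 A) (hAidem : ∀ x, IsIdempotentElem (A x)) {g : E → E}
    (hg : ContDiff ℝ 1 g) {F q p : ℝ → E} {T : ℝ} {K : ℝ≥0} (hF : LipschitzOnWith K F (Icc 0 T))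
    (hm : IsConstrainedMotion W A g F T q p) :
    ∃ K > (0 : ℝ), ∃ h₀ > (0 : ℝ), ∀ h : ℝ, 0 < h → h ≤ h₀ → ∀ Q P : ℕ → E,
      Q 0 = q 0 → P 0 = p 0 →
      (∀ k, IsReflectedEulerStep W A g h (Q k) (P k) (Q (k + 1)) (P (k + 1))) →
      ∀ k : ℕ, k * h ≤ T → ‖Q k - q (k * h)‖ ≤ K * h := by
  obtain ⟨C, s, hB⟩ := exists_schemeBounds hA hg hF hm
  have hC : (0 : ℝ) < C := zero_lt_one.trans_le hB.one_le_coe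
  set M : ℝ := 4 * C ^ 2 * Real.exp (500 * C ^ 10 * T)
  refine ⟨M, by positivity, min (1 / (8 * C ^ 3)) (1 / M), by positivity,
    fun h hh hh₀ Q P hQ0 hP0 hstep k hk ↦ ?_⟩
  rw [le_min_iff, le_div_iff₀' (by positivity), le_div_iff₀' (by positivity)] at hh₀
  exact hB.norm_position_sub_le hm hAidem hh.le hh₀.1 hh₀.2 hQ0 hP0 hstep hk

end ReflectedEuler

section Matrices

variable {𝕜 X : Type*} [NontriviallyNormedField 𝕜] [NormedAddCommGroup X] [NormedSpace 𝕜 X]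
  {l m n : Type*} [Fintype m] {k : WithTop ℕ∞}

lemma contDiff_mulVec {D : X → Matrix l m 𝕜} {v : X → m → 𝕜} [Fintype l]
    (hD : ∀ a b, ContDiff 𝕜 k fun x ↦ D x a b) (hv : ContDiff 𝕜 k v) :
    ContDiff 𝕜 k fun x ↦ D x *ᵥ v x :=
  contDiff_pi.2 fun a ↦ ContDiff.sum fun b _ ↦ (hD a b).mul (contDiff_pi.1 hv b)

lemma contDiff_matrix_mul_apply {D : X → Matrix l m 𝕜} {D' : X → Matrix m n 𝕜}
    (hD : ∀ a b, ContDiff 𝕜 k fun x ↦ D x a b) (hD' : ∀ a b, ContDiff 𝕜 k fun x ↦ D' x a b)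
    (a : l) (b : n) : ContDiff 𝕜 k fun x ↦ (D x * D' x) a b :=
  ContDiff.sum fun c _ ↦ (hD a c).mul (hD' c b)

variable [DecidableEq m]

lemma contDiff_matrix_det {D : X → Matrix m m 𝕜} (hD : ∀ a b, ContDiff 𝕜 k fun x ↦ D x a b) :
    ContDiff 𝕜 k fun x ↦ (D x).det := by
  simp only [det_apply]
  exact ContDiff.sum fun σ _ ↦ (contDiff_prod fun a _ ↦ hD (σ a) a).const_smul _

lemma contDiff_matrix_inv_apply {D : X → Matrix m m 𝕜} (hD : ∀ a b, ContDiff 𝕜 k fun x ↦ D x a b)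
    (hu : ∀ x, IsUnit (D x)) (a b : m) : ContDiff 𝕜 k fun x ↦ (D x)⁻¹ a b := by
  simp only [inv_def, Ring.inverse_eq_inv', Matrix.smul_apply, smul_eq_mul, adjugate_apply]
  refine ((contDiff_matrix_det hD).inv fun x ↦ ((isUnit_iff_isUnit_det _).1 (hu x)).ne_zero).mul
    (contDiff_matrix_det fun i j ↦ ?_)
  obtain rfl | hi := eq_or_ne i b
  · simpa only [updateRow_self] using contDiff_const
  · simpa only [updateRow_ne hi] using hD i j

end Matrices

section Constraint

variable {ι κ : Type*} [Fintype ι] {W : Matrix ι ι ℝ} {μ : (ι → ℝ) → Matrix κ ι ℝ}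
  {g : (ι → ℝ) → ι → ℝ}

/-- The quadratic form `μ_q(x)[v, v]` of the derivative of the constraint matrix `μ` at `x`. -/
noncomputable def constraintDerivForm (μ : (ι → ℝ) → Matrix κ ι ℝ) (x v : ι → ℝ) : κ → ℝ :=
  fun a ↦ ∑ i, fderiv ℝ (fun y ↦ μ y a i) x v * v i

lemma hasDerivWithinAt_constraint {q v : ℝ → ι → ℝ} {v' : ι → ℝ} {s : Set ℝ} {t : ℝ}
    (hμ : ∀ a i, Differentiable ℝ fun x ↦ μ x a i) (hq : HasDerivWithinAt q (v t) s t)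
    (hv : HasDerivWithinAt v v' s t) :
    HasDerivWithinAt (fun r ↦ μ (q r) *ᵥ v r) (constraintDerivForm μ (q t) (v t) + μ (q t) *ᵥ v')
      s t := by
  refine hasDerivWithinAt_pi.2 fun a ↦ ?_
  have hsum := HasDerivWithinAt.fun_sum (u := Finset.univ) fun i _ ↦
    ((hμ a i (q t)).hasFDerivAt.comp_hasDerivWithinAt t hq).fun_mul (hasDerivWithinAt_pi.1 hv i)
  rw [Finset.sum_add_distrib] at hsum
  exact hsum

variable [Fintype κ] [DecidableEq κ]

/-- The projection `μᵀ (μ W μᵀ)⁻¹ μ W` onto the range of `μᵀ` along the kernel of `μ W`, where `W`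
is the inverse mass matrix. It is meaningful when `μ W μᵀ` is invertible. -/
noncomputable def constraintProj (W : Matrix ι ι ℝ) (μ : Matrix κ ι ℝ) : Matrix ι ι ℝ :=
  μᵀ * (μ * W * μᵀ)⁻¹ * μ * W

lemma constraintProj_mulVec (W : Matrix ι ι ℝ) (μ : Matrix κ ι ℝ) (x : ι → ℝ) :
    constraintProj W μ *ᵥ x = μᵀ *ᵥ ((μ * W * μᵀ)⁻¹ *ᵥ (μ *ᵥ (W *ᵥ x))) := by
  simp only [constraintProj, mulVec_mulVec, Matrix.mul_assoc]

lemma constraintProj_mul_transpose {μ : Matrix κ ι ℝ} (hC : IsUnit (μ * W * μᵀ)) :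
    constraintProj W μ * μᵀ = μᵀ := by
  calc constraintProj W μ * μᵀ = μᵀ * ((μ * W * μᵀ)⁻¹ * (μ * W * μᵀ)) := by
        simp only [constraintProj, Matrix.mul_assoc]
    _ = μᵀ := by
        rw [nonsing_inv_mul _ ((isUnit_iff_isUnit_det _).1 hC), Matrix.mul_one]

lemma isIdempotentElem_constraintProj {μ : Matrix κ ι ℝ} (hC : IsUnit (μ * W * μᵀ)) :
    IsIdempotentElem (constraintProj W μ) := by
  calc constraintProj W μ * constraintProj W μ
      = constraintProj W μ * μᵀ * ((μ * W * μᵀ)⁻¹ * μ * W) := by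
        simp only [constraintProj, Matrix.mul_assoc]
    _ = constraintProj W μ := by
        rw [constraintProj_mul_transpose hC]
        simp only [constraintProj, Matrix.mul_assoc]

/-- The force `μᵀ C⁻¹ (μ_q[W p, W p] - μ W g)`, with `C = μ W μᵀ`, that keeps the motion
`q' = W p`, `p' = -g(q) - force` on the constraint `μ(q) W p = 0`. -/
noncomputable def constraintForce (W : Matrix ι ι ℝ) (μ : (ι → ℝ) → Matrix κ ι ℝ)
    (g : (ι → ℝ) → ι → ℝ) (x y : ι → ℝ) : ι → ℝ :=
  (μ x)ᵀ *ᵥ ((μ x * W * (μ x)ᵀ)⁻¹ *ᵥ (constraintDerivForm μ x (W *ᵥ y) - μ x *ᵥ (W *ᵥ g x)))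

lemma constraintProj_mulVec_constraintForce {x : ι → ℝ} (hC : IsUnit (μ x * W * (μ x)ᵀ))
    (y : ι → ℝ) :
    constraintProj W (μ x) *ᵥ constraintForce W μ g x y = constraintForce W μ g x y := by
  rw [constraintForce, mulVec_mulVec, constraintProj_mul_transpose hC]

lemma constraintDerivForm_add_mulVec {x : ι → ℝ} (hC : IsUnit (μ x * W * (μ x)ᵀ)) (y : ι → ℝ) :
    constraintDerivForm μ x (W *ᵥ y) + μ x *ᵥ (W *ᵥ (-g x - constraintForce W μ g x y)) = 0 := by
  have hforce : μ x *ᵥ (W *ᵥ constraintForce W μ g x y) =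
      constraintDerivForm μ x (W *ᵥ y) - μ x *ᵥ (W *ᵥ g x) := by
    rw [constraintForce, mulVec_mulVec, mulVec_mulVec, mulVec_mulVec,
      mul_nonsing_inv _ ((isUnit_iff_isUnit_det _).1 hC), one_mulVec]
  rw [mulVec_sub, mulVec_sub, hforce, mulVec_neg, mulVec_neg]
  abel

lemma mulVec_momentum_eq_zero (hμ : ∀ a i, Differentiable ℝ fun x ↦ μ x a i)
    (hC : ∀ x, IsUnit (μ x * W * (μ x)ᵀ)) {T : ℝ} {q p : ℝ → ι → ℝ}
    (hq : ∀ t ∈ Icc 0 T, HasDerivWithinAt q (W *ᵥ p t) (Icc 0 T) t)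
    (hp : ∀ t ∈ Icc 0 T,
      HasDerivWithinAt p (-g (q t) - constraintForce W μ g (q t) (p t)) (Icc 0 T) t)
    (hinit : μ (q 0) *ᵥ (W *ᵥ p 0) = 0) {t : ℝ} (ht : t ∈ Icc 0 T) :
    μ (q t) *ᵥ (W *ᵥ p t) = 0 := by
  have hderiv : ∀ r ∈ Icc 0 T,
      HasDerivWithinAt (fun r ↦ μ (q r) *ᵥ (W *ᵥ p r)) 0 (Icc 0 T) r := fun r hr ↦ by
    rw [← constraintDerivForm_add_mulVec (g := g) (hC (q r)) (p r)]
    exact hasDerivWithinAt_constraint hμ (hq r hr)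
      (W.mulVecLin.toContinuousLinearMap.hasFDerivAt.comp_hasDerivWithinAt r (hp r hr))
  have hconst := (convex_Icc 0 T).norm_image_sub_le_of_norm_hasDerivWithin_le (C := 0) hderiv
    (fun _ _ ↦ norm_zero.le) (left_mem_Icc.2 (ht.1.trans ht.2)) ht
  rwa [zero_mul, norm_le_zero_iff, hinit, sub_zero] at hconst

variable {k l : WithTop ℕ∞}

lemma contDiff_inv_constraint (hμ : ∀ a i, ContDiff ℝ k fun x ↦ μ x a i)
    (hC : ∀ x, IsUnit (μ x * W * (μ x)ᵀ)) (a b : κ) :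
    ContDiff ℝ k fun x ↦ (μ x * W * (μ x)ᵀ)⁻¹ a b :=
  have hμW := contDiff_matrix_mul_apply (D' := fun _ ↦ W) hμ fun _ _ ↦ contDiff_const
  contDiff_matrix_inv_apply (contDiff_matrix_mul_apply hμW fun i d ↦ hμ d i) hC a b

lemma contDiff_constraintProj (hμ : ∀ a i, ContDiff ℝ k fun x ↦ μ x a i)
    (hC : ∀ x, IsUnit (μ x * W * (μ x)ᵀ)) :
    ContDiff ℝ k fun x ↦ (constraintProj W (μ x)).mulVecLin.toContinuousLinearMap := by
  refine contDiff_clm_apply_iff.2 fun y ↦ ?_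
  simp only [LinearMap.coe_toContinuousLinearMap', mulVecLin_apply, constraintProj_mulVec]
  exact contDiff_mulVec (fun i a ↦ hμ a i) <|
    contDiff_mulVec (contDiff_inv_constraint hμ hC) <| contDiff_mulVec hμ contDiff_const

lemma contDiff_constraintForce (hμ : ∀ a i, ContDiff ℝ l fun x ↦ μ x a i)
    (hC : ∀ x, IsUnit (μ x * W * (μ x)ᵀ)) (hg : ContDiff ℝ k g)
    (hkl : k + 1 ≤ l) :
    ContDiff ℝ k fun z : (ι → ℝ) × (ι → ℝ) ↦ constraintForce W μ g z.1 z.2 := by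
  have hμ₁ (a : κ) (i : ι) : ContDiff ℝ k fun z : (ι → ℝ) × (ι → ℝ) ↦ μ z.1 a i :=
    ((hμ a i).of_le (le_self_add.trans hkl)).comp contDiff_fst
  have hvel : ContDiff ℝ k fun z : (ι → ℝ) × (ι → ℝ) ↦ W *ᵥ z.2 :=
    contDiff_mulVec (fun _ _ ↦ contDiff_const) contDiff_snd
  have hform : ContDiff ℝ k fun z : (ι → ℝ) × (ι → ℝ) ↦ constraintDerivForm μ z.1 (W *ᵥ z.2) :=
    contDiff_pi.2 fun a ↦ ContDiff.sum fun i _ ↦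
      ((((hμ a i).fderiv_right hkl).comp contDiff_fst).clm_apply hvel).mul
        (contDiff_pi.1 hvel i)
  exact contDiff_mulVec (fun i a ↦ hμ₁ a i) <|
    contDiff_mulVec (fun a b ↦
      ((contDiff_inv_constraint hμ hC a b).of_le (le_self_add.trans hkl)).comp contDiff_fst) <|
    hform.sub <| contDiff_mulVec hμ₁ <|
      contDiff_mulVec (fun _ _ ↦ contDiff_const) (hg.comp contDiff_fst)

end Constraint

section Convergence

variable {ι κ : Type*} [Fintype ι] [Fintype κ] [DecidableEq κ] {W : Matrix ι ι ℝ}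
  {μ : (ι → ℝ) → Matrix κ ι ℝ} {g : (ι → ℝ) → ι → ℝ} {q p : ℝ → ι → ℝ} {T : ℝ}

lemma isConstrainedMotion_constraintForce (hμ : ∀ a i, Differentiable ℝ fun x ↦ μ x a i)
    (hC : ∀ x, IsUnit (μ x * W * (μ x)ᵀ))
    (hq : ∀ t ∈ Icc 0 T, HasDerivWithinAt q (W *ᵥ p t) (Icc 0 T) t)
    (hp : ∀ t ∈ Icc 0 T,
      HasDerivWithinAt p (-g (q t) - constraintForce W μ g (q t) (p t)) (Icc 0 T) t)
    (hinit : μ (q 0) *ᵥ (W *ᵥ p 0) = 0) :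
    IsConstrainedMotion W.mulVecLin.toContinuousLinearMap
      (fun x ↦ (constraintProj W (μ x)).mulVecLin.toContinuousLinearMap) g
      (fun t ↦ constraintForce W μ g (q t) (p t)) T q p where
  hasDerivWithinAt_position := hq
  hasDerivWithinAt_momentum := hp
  constraint t ht := by
    simp only [LinearMap.coe_toContinuousLinearMap', mulVecLin_apply, constraintProj_mulVec,
      mulVec_momentum_eq_zero hμ hC hq hp hinit ht, mulVec_zero]
  force_mem_range t _ := constraintProj_mulVec_constraintForce (hC (q t)) (p t)

theorem nonholonomic_eulerA_first_order_convergent_general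
    (hμ : ∀ a i, ContDiff ℝ 2 fun x ↦ μ x a i) (hC : ∀ x, IsUnit (μ x * W * (μ x)ᵀ))
    (hg : ContDiff ℝ 1 g)
    (hq : ∀ t ∈ Icc 0 T, HasDerivWithinAt q (W *ᵥ p t) (Icc 0 T) t)
    (hp : ∀ t ∈ Icc 0 T,
      HasDerivWithinAt p (-g (q t) - constraintForce W μ g (q t) (p t)) (Icc 0 T) t)
    (hinit : μ (q 0) *ᵥ (W *ᵥ p 0) = 0) :
    ∃ K > (0 : ℝ), ∃ h₀ > (0 : ℝ), ∀ h : ℝ, 0 < h → h ≤ h₀ →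
      ∀ Q P : ℕ → ι → ℝ, Q 0 = q 0 → P 0 = p 0 →
        (∀ k, P (k + 1) = P k - h • g (Q k) - (2 : ℝ) • (constraintProj W (μ (Q k)) *ᵥ P k)) →
        (∀ k, Q (k + 1) = Q k + h • (W *ᵥ P (k + 1))) →
        ∀ k : ℕ, k * h ≤ T → ‖Q k - q (k * h)‖ ≤ K * h := by
  have hm := isConstrainedMotion_constraintForce
    (fun a i ↦ (hμ a i).differentiable two_ne_zero) hC hq hp hinit
  have hG := contDiff_constraintForce hμ hC hg one_add_one_eq_two.le
  have hF := hG.continuous.comp_continuousOn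
    (hm.continuousOn_position.prodMk hm.continuousOn_momentum)
  obtain ⟨Lq, hLq⟩ := hm.exists_lipschitzOnWith_position
  obtain ⟨Lp, hLp⟩ := hm.exists_lipschitzOnWith_momentum hg.continuous hF
  obtain ⟨LF, hLF⟩ := exists_lipschitzOnWith_comp_prodMk hG isCompact_Icc hLq hLp
  have hproj (x : ι → ℝ) :
      IsIdempotentElem (constraintProj W (μ x)).mulVecLin.toContinuousLinearMap :=
    ContinuousLinearMap.ext fun y ↦ (mulVec_mulVec ..).trans
      congr($(isIdempotentElem_constraintProj (hC x)) *ᵥ y)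
  obtain ⟨K, hK, h₀, hh₀, H⟩ := exists_reflectedEuler_firstOrder_bound
    (contDiff_constraintProj hμ hC) hproj hg hLF hm
  exact ⟨K, hK, h₀, hh₀, fun h hh hle Q P hQ0 hP0 hP hQ ↦
    H h hh hle Q P hQ0 hP0 fun k ↦ ⟨(hP k).trans (sub_right_comm ..), hQ k⟩⟩

end Convergence

lemma contDiff_gradient {n : ℕ} {V : (Fin n → ℝ) → ℝ} {k l : WithTop ℕ∞} (hV : ContDiff ℝ l V)
    {Vq : (Fin n → ℝ) → Fin n → ℝ} (hVq : ∀ x, HasFDerivAt V (vecCLM (Vq x)) x) (hkl : k + 1 ≤ l) :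
    ContDiff ℝ k Vq := by
  refine contDiff_pi.2 fun i ↦ ?_
  have hpartial : (fun x ↦ Vq x i) = fun x ↦ fderiv ℝ V x (Pi.single i 1) := by
    funext x
    simp [(hVq x).fderiv, vecCLM, Pi.single_apply]
  rw [hpartial]
  exact (hV.fderiv_right hkl).clm_apply contDiff_const

/-- Global first-order convergence of the nonholonomic Euler A
method. `(q, p)` is a `C¹` solution on `[0,T]` of the constrained Hamiltonian
system `q̇ = M⁻¹p`,
`ṗ = −V_q(q) − μ(q)ᵀ C(q)⁻¹ (μ_q(q)[M⁻¹p, M⁻¹p] − μ(q) M⁻¹ V_q(q))`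
with `C(q) = μ(q) M⁻¹ μ(q)ᵀ` invertible everywhere and constrained initial
condition. `Q k` stands for `q_k` and `P k` for `p_{k−1/2}` in the discrete
scheme `p_{k+1/2} = p_{k−1/2} − h V_q(q_k) − 2 μ(q_k)ᵀ C(q_k)⁻¹ μ(q_k) M⁻¹
p_{k−1/2}`, `q_{k+1} = q_k + h M⁻¹ p_{k+1/2}`. Then there are `K > 0`, `h₀ > 0`
with `‖q_k − q(k·h)‖ ≤ K·h` for all `0 < h ≤ h₀` and `k·h ≤ T`. -/
theorem nonholonomic_eulerA_first_order_convergent {n m : ℕ}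
    (M : Matrix (Fin n) (Fin n) ℝ) (hM : M.PosDef) (hMsymm : Mᵀ = M)
    (V : (Fin n → ℝ) → ℝ) (hV : ContDiff ℝ 2 V)
    (Vq : (Fin n → ℝ) → Fin n → ℝ)
    (hVq : ∀ x, HasFDerivAt V (vecCLM (Vq x)) x)
    (μ : (Fin n → ℝ) → Matrix (Fin m) (Fin n) ℝ)
    (hμ : ∀ a i, ContDiff ℝ 2 fun x => μ x a i)
    (hC : ∀ x : Fin n → ℝ, IsUnit (μ x * M⁻¹ * (μ x)ᵀ))
    (T : ℝ) (hT : 0 < T)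
    (q p : ℝ → Fin n → ℝ)
    (hq : ∀ t ∈ Set.Icc (0 : ℝ) T, HasDerivAt q (M⁻¹ *ᵥ p t) t)
    (hp : ∀ t ∈ Set.Icc (0 : ℝ) T, HasDerivAt p
      (-Vq (q t) - (μ (q t))ᵀ *ᵥ ((μ (q t) * M⁻¹ * (μ (q t))ᵀ)⁻¹ *ᵥ
        ((fun a => ∑ i, fderiv ℝ (fun x => μ x a i) (q t) (M⁻¹ *ᵥ p t) *
            (M⁻¹ *ᵥ p t) i) -
          μ (q t) *ᵥ (M⁻¹ *ᵥ Vq (q t))))) t)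
    (hinit : μ (q 0) *ᵥ (M⁻¹ *ᵥ p 0) = 0) :
    ∃ K > (0 : ℝ), ∃ h₀ > (0 : ℝ), ∀ h : ℝ, 0 < h → h ≤ h₀ →
      ∀ Q P : ℕ → Fin n → ℝ,
        Q 0 = q 0 → P 0 = p 0 →
        (∀ k : ℕ, P (k + 1) = P k - h • Vq (Q k) -
          (2 : ℝ) • ((μ (Q k))ᵀ *ᵥ ((μ (Q k) * M⁻¹ * (μ (Q k))ᵀ)⁻¹ *ᵥ
            (μ (Q k) *ᵥ (M⁻¹ *ᵥ P k))))) →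
        (∀ k : ℕ, Q (k + 1) = Q k + h • (M⁻¹ *ᵥ P (k + 1))) →
        ∀ k : ℕ, (k : ℝ) * h ≤ T →
          ‖Q k - q ((k : ℝ) * h)‖ ≤ K * h := by
  simpa only [constraintProj_mulVec] using
    nonholonomic_eulerA_first_order_convergent_general hμ hC
      (contDiff_gradient hV hVq one_add_one_eq_two.le)
      (fun t ht ↦ (hq t ht).hasDerivWithinAt) (fun t ht ↦ (hp t ht).hasDerivWithinAt) hinit
end

section
/- Let M be an invertible symmetric n×n real matrix, V : ℝⁿ → ℝ differentiable with gradient V_q, μ : ℝⁿ → ℝ^{m×n}, and h > 0. Suppose (q, p̃, λ̃), (q', p̃', λ̃'), (q'', p̃'', λ̃'') in ℝⁿ × ℝⁿ × ℝᵐ satisfy: (Euler B with time step −h) q' = q − h M⁻¹ p̃ − (h²/2) M⁻¹ V_q(q) − (h²/2) M⁻¹ μ(q)ᵀ λ̃; p̃' = p̃ + (h/2) V_q(q) + (h/2) μ(q)ᵀ λ̃ + (h/2) V_q(q') + (h/2) μ(q')ᵀ λ̃'; 0 = −μ(q) M⁻¹ p̃' + (h/2) μ(q) M⁻¹ V_q(q')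 + (h/2) μ(q) M⁻¹ μ(q)ᵀ λ̃ + (h/2) μ(q) M⁻¹ μ(q')ᵀ λ̃'; and (Euler A with time step h) q'' = q' + h M⁻¹ p̃' − (h²/2) M⁻¹ V_q(q') − (h²/2) M⁻¹ μ(q')ᵀ λ̃'; p̃'' = p̃' − (h/2) V_q(q') − (h/2) μ(q')ᵀ λ̃' − (h/2) V_q(q'') − (h/2) μ(q'')ᵀ λ̃''; 0 = μ(q'') M⁻¹ p̃' − (h/2) μ(q'') M⁻¹ V_q(q') − (h/2) μ(q'') M⁻¹ μ(q')ᵀ λ̃' − (h/2) μ(q'') M⁻¹ μ(q'')ᵀ λ̃''. If C(q) = μ(q) M⁻¹ μ(q)ᵀ is invertible, then q'' = q, p̃'' = p̃ and λ̃'' = λ̃; that is, the nonholonomic extensions of the Euler A and Euler B methods are adjoint methods of one another. -/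
/-!
Euler A and Euler B make the same position and momentum updates, and these are undone by
exchanging the two states and reversing the sign of the time step. The constraint of one method
becomes that of the other under this exchange, so an Euler B step with time step `-h` from `z` to
`z'` is the same as an Euler A step with time step `h` from `z'` to `z`. What is left is that
Euler A is single-valued: two steps from the same state have the same final position `q`, and
subtracting their constraints leaves `(h / 2) C(q) (λ - λ') = 0`.
-/

open Matrix

/-- The data of a nonholonomic system `p = M q̇`, `ṗ = -V_q(q) - μ(q)ᵀ λ`, `μ(q) q̇ = 0`, with
positions in `Q`, momenta in `P`, multipliers in `L` and constraint values in `N`. The fields stand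
for `M⁻¹`, `V_q`, `μ` and `μᵀ`; they are independent of one another, so that nonconservative forces
and non-ideal constraint reactions are allowed. -/
structure NonholonomicSystem (K Q P L N : Type*) [Field K] [AddCommGroup Q] [AddCommGroup P]
    [AddCommGroup L] [AddCommGroup N] [Module K Q] [Module K P] [Module K L] [Module K N] where
  invMass : P →ₗ[K] Q
  gradient : Q → P
  constraint : Q → Q →ₗ[K] N
  reaction : Q → L →ₗ[K] P

namespace NonholonomicSystem

/-- The state `(q, p, λ)` of a one-step method: position, momentum and multiplier. -/
@[ext]
structure State (Q P L : Type*) where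
  pos : Q
  mom : P
  mult : L

variable {K Q P L N : Type*} [Field K] [AddCommGroup Q] [AddCommGroup P] [AddCommGroup L]
  [AddCommGroup N] [Module K Q] [Module K P] [Module K L] [Module K N]
  (S : NonholonomicSystem K Q P L N) {h : K} {z z' z'' : State Q P L}

/-- The Delassus operator `C(q) = μ(q) M⁻¹ μ(q)ᵀ` of the constraints. -/
def delassus (q : Q) : L →ₗ[K] N :=
  S.constraint q ∘ₗ S.invMass ∘ₗ S.reaction q

/-- The impulse `(h / 2) (V_q(q) + μ(q)ᵀ λ)` that a state takes from the momentum over half a time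
step. -/
def halfImpulse (h : K) (z : State Q P L) : P :=
  (h / 2) • (S.gradient z.pos + S.reaction z.pos z.mult)

/-- The position and momentum updates common to the nonholonomic Euler A and Euler B methods, which
are those of the Störmer–Verlet method with total force `-V_q(q) - μ(q)ᵀ λ`. -/
structure IsVerletStep (h : K) (z z' : State Q P L) : Prop where
  pos : z'.pos = z.pos + h • S.invMass (z.mom - S.halfImpulse h z)
  mom : z'.mom = z.mom - S.halfImpulse h z' - S.halfImpulse h z

/-- A step of the nonholonomic extension of the Euler A method, with time step `h`. The step is a
relation, as the method is implicit. -/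
structure IsEulerAStep (h : K) (z z' : State Q P L) : Prop extends S.IsVerletStep h z z' where
  constraint : S.constraint z'.pos
    (S.invMass (z.mom - S.halfImpulse h z - (h / 2) • S.reaction z'.pos z'.mult)) = 0

/-- A step of the nonholonomic extension of the Euler B method, with time step `h`. The step is a
relation, as the method is implicit. -/
structure IsEulerBStep (h : K) (z z' : State Q P L) : Prop extends S.IsVerletStep h z z' where
  constraint : S.constraint z.pos
    (S.invMass (z'.mom + S.halfImpulse h z' + (h / 2) • S.reaction z.pos z.mult)) = 0

section Adjoint

variable {S}

theorem halfImpulse_neg (h : K) (z : State Q P L) : S.halfImpulse (-h) z = -S.halfImpulse h z := by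
  simp only [halfImpulse, neg_div, neg_smul]

theorem IsVerletStep.reverse (hz : S.IsVerletStep h z z') : S.IsVerletStep (-h) z' z where
  pos := by
    have hmid : z'.mom - S.halfImpulse (-h) z' = z.mom - S.halfImpulse h z := by
      rw [hz.mom, halfImpulse_neg]; abel
    rw [hmid, hz.pos]; module
  mom := by
    rw [hz.mom, halfImpulse_neg, halfImpulse_neg]; abel

theorem isEulerBStep_neg_iff_isEulerAStep :
    S.IsEulerBStep (-h) z z' ↔ S.IsEulerAStep h z' z where
  mp hz :=
    { toIsVerletStep := neg_neg h ▸ hz.toIsVerletStep.reverse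
      constraint := by
        simpa only [halfImpulse_neg, neg_div, neg_smul, ← sub_eq_add_neg] using hz.constraint }
  mpr hz :=
    { toIsVerletStep := hz.toIsVerletStep.reverse
      constraint := by
        simpa only [halfImpulse_neg, neg_div, neg_smul, ← sub_eq_add_neg] using hz.constraint }

theorem IsEulerAStep.unique [NeZero (2 : K)] (hh : h ≠ 0) (hz' : S.IsEulerAStep h z z')
    (hz'' : S.IsEulerAStep h z z'') (hC : Function.Injective (S.delassus z'.pos)) : z' = z'' := by
  have hpos : z''.pos = z'.pos := hz''.pos.trans hz'.pos.symm
  have hmult : z''.mult = z'.mult := by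
    have hconstraint := hz''.constraint.trans hz'.constraint.symm
    simp only [hpos, map_sub, map_smul, sub_right_inj] at hconstraint
    exact hC (smul_right_injective N (div_ne_zero hh two_ne_zero) hconstraint)
  have himpulse : S.halfImpulse h z'' = S.halfImpulse h z' := by
    simp only [halfImpulse, hpos, hmult]
  exact State.ext hpos.symm (by rw [hz'.mom, hz''.mom, himpulse]) hmult.symm

end Adjoint

section Expanded

theorem isEulerAStep_iff :
    S.IsEulerAStep h z z' ↔
      (z'.pos = z.pos + h • S.invMass z.mom - (h ^ 2 / 2) • S.invMass (S.gradient z.pos)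
        - (h ^ 2 / 2) • S.invMass (S.reaction z.pos z.mult)) ∧
      (z'.mom = z.mom - (h / 2) • S.gradient z.pos - (h / 2) • S.reaction z.pos z.mult
        - (h / 2) • S.gradient z'.pos - (h / 2) • S.reaction z'.pos z'.mult) ∧
      0 = S.constraint z'.pos (S.invMass z.mom)
        - (h / 2) • S.constraint z'.pos (S.invMass (S.gradient z.pos))
        - (h / 2) • S.constraint z'.pos (S.invMass (S.reaction z.pos z.mult))
        - (h / 2) • S.constraint z'.pos (S.invMass (S.reaction z'.pos z'.mult)) := by
  have hfields : S.IsEulerAStep h z z' ↔ _ ∧ _ ∧ _ :=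
    ⟨fun hz ↦ ⟨hz.pos, hz.mom, hz.constraint.symm⟩, fun hz ↦ ⟨⟨hz.1, hz.2.1⟩, hz.2.2.symm⟩⟩
  rw [hfields]
  refine and_congr (Eq.congr_right ?_) (and_congr (Eq.congr_right ?_) (Eq.congr_right ?_)) <;>
    simp only [halfImpulse, map_sub, map_add, map_smul] <;> module

theorem isEulerBStep_neg_iff :
    S.IsEulerBStep (-h) z z' ↔
      (z'.pos = z.pos - h • S.invMass z.mom - (h ^ 2 / 2) • S.invMass (S.gradient z.pos)
        - (h ^ 2 / 2) • S.invMass (S.reaction z.pos z.mult)) ∧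
      (z'.mom = z.mom + (h / 2) • S.gradient z.pos + (h / 2) • S.reaction z.pos z.mult
        + (h / 2) • S.gradient z'.pos + (h / 2) • S.reaction z'.pos z'.mult) ∧
      0 = -S.constraint z.pos (S.invMass z'.mom)
        + (h / 2) • S.constraint z.pos (S.invMass (S.gradient z'.pos))
        + (h / 2) • S.constraint z.pos (S.invMass (S.reaction z.pos z.mult))
        + (h / 2) • S.constraint z.pos (S.invMass (S.reaction z'.pos z'.mult)) := by
  have hfields : S.IsEulerBStep (-h) z z' ↔ _ ∧ _ ∧ 0 = -S.constraint z.pos (S.invMass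
      (z'.mom + S.halfImpulse (-h) z' + (-h / 2) • S.reaction z.pos z.mult)) :=
    ⟨fun hz ↦ ⟨hz.pos, hz.mom, (neg_eq_zero.2 hz.constraint).symm⟩,
      fun hz ↦ ⟨⟨hz.1, hz.2.1⟩, neg_eq_zero.1 hz.2.2.symm⟩⟩
  rw [hfields]
  refine and_congr (Eq.congr_right ?_) (and_congr (Eq.congr_right ?_) (Eq.congr_right ?_)) <;>
    simp only [halfImpulse, map_sub, map_add, map_smul] <;> module

end Expanded

section Matrix

variable {m n : Type*} [Fintype m] [Fintype n]

/-- The nonholonomic system in coordinates with inverse mass matrix `W` and gradient `g`, whose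
reactions are ideal: they are given by the transposes of the constraint matrices `μ`. -/
def ofMatrix (W : Matrix n n K) (g : (n → K) → n → K) (μ : (n → K) → Matrix m n K) :
    NonholonomicSystem K (n → K) (n → K) (m → K) (m → K) where
  invMass := W.mulVecLin
  gradient := g
  constraint q := (μ q).mulVecLin
  reaction q := (μ q)ᵀ.mulVecLin

theorem delassus_ofMatrix (W : Matrix n n K) (g : (n → K) → n → K) (μ : (n → K) → Matrix m n K)
    (q : n → K) : (ofMatrix W g μ).delassus q = (μ q * W * (μ q)ᵀ).mulVecLin := by
  simp only [delassus, ofMatrix, mulVecLin_mul, LinearMap.comp_assoc]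

end Matrix

end NonholonomicSystem

open NonholonomicSystem

theorem eulerA_eulerB_adjoint_general {K Q P L N : Type*} [Field K] [NeZero (2 : K)]
    [AddCommGroup Q] [AddCommGroup P] [AddCommGroup L] [AddCommGroup N]
    [Module K Q] [Module K P] [Module K L] [Module K N]
    (S : NonholonomicSystem K Q P L N) {h : K} (hh : h ≠ 0) {z z' z'' : State Q P L}
    (hB : S.IsEulerBStep (-h) z z') (hA : S.IsEulerAStep h z' z'')
    (hC : Function.Injective (S.delassus z.pos)) : z'' = z := by
  have hA' : S.IsEulerAStep h z' z := isEulerBStep_neg_iff_isEulerAStep.1 hB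
  exact (hA'.unique hh hA hC).symm

/-- The nonholonomic extensions of the Euler A and Euler B methods
are adjoint of one another: if `(q', p̃', λ̃')` is obtained from `(q, p̃, λ̃)` by
the Euler B method with time step `−h`, and `(q'', p̃'', λ̃'')` from
`(q', p̃', λ̃')` by the Euler A method with time step `h`, and
`C(q) = μ(q) M⁻¹ μ(q)ᵀ` is invertible, then `(q'', p̃'', λ̃'') = (q, p̃, λ̃)`. -/
theorem eulerA_eulerB_adjoint {n m : ℕ}
    (M : Matrix (Fin n) (Fin n) ℝ) (hM : IsUnit M) (hMsymm : Mᵀ = M)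
    (V : (Fin n → ℝ) → ℝ) (Vq : (Fin n → ℝ) → Fin n → ℝ)
    (hV : ∀ x, HasFDerivAt V (vecCLM (Vq x)) x)
    (μ : (Fin n → ℝ) → Matrix (Fin m) (Fin n) ℝ)
    (h : ℝ) (hh : 0 < h)
    (q pt : Fin n → ℝ) (lt : Fin m → ℝ)
    (q' pt' : Fin n → ℝ) (lt' : Fin m → ℝ)
    (q'' pt'' : Fin n → ℝ) (lt'' : Fin m → ℝ)
    -- Euler B with time step −h:
    (hBq : q' = q - h • (M⁻¹ *ᵥ pt) - (h ^ 2 / 2) • (M⁻¹ *ᵥ Vq q)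
        - (h ^ 2 / 2) • (M⁻¹ *ᵥ ((μ q)ᵀ *ᵥ lt)))
    (hBp : pt' = pt + (h / 2) • Vq q + (h / 2) • ((μ q)ᵀ *ᵥ lt)
        + (h / 2) • Vq q' + (h / 2) • ((μ q')ᵀ *ᵥ lt'))
    (hBc : 0 = -(μ q *ᵥ (M⁻¹ *ᵥ pt')) + (h / 2) • (μ q *ᵥ (M⁻¹ *ᵥ Vq q'))
        + (h / 2) • (μ q *ᵥ (M⁻¹ *ᵥ ((μ q)ᵀ *ᵥ lt)))
        + (h / 2) • (μ q *ᵥ (M⁻¹ *ᵥ ((μ q')ᵀ *ᵥ lt'))))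
    -- Euler A with time step h:
    (hAq : q'' = q' + h • (M⁻¹ *ᵥ pt') - (h ^ 2 / 2) • (M⁻¹ *ᵥ Vq q')
        - (h ^ 2 / 2) • (M⁻¹ *ᵥ ((μ q')ᵀ *ᵥ lt')))
    (hAp : pt'' = pt' - (h / 2) • Vq q' - (h / 2) • ((μ q')ᵀ *ᵥ lt')
        - (h / 2) • Vq q'' - (h / 2) • ((μ q'')ᵀ *ᵥ lt''))
    (hAc : 0 = μ q'' *ᵥ (M⁻¹ *ᵥ pt') - (h / 2) • (μ q'' *ᵥ (M⁻¹ *ᵥ Vq q'))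
        - (h / 2) • (μ q'' *ᵥ (M⁻¹ *ᵥ ((μ q')ᵀ *ᵥ lt')))
        - (h / 2) • (μ q'' *ᵥ (M⁻¹ *ᵥ ((μ q'')ᵀ *ᵥ lt''))))
    (hC : IsUnit (μ q * M⁻¹ * (μ q)ᵀ)) :
    q'' = q ∧ pt'' = pt ∧ lt'' = lt := by
  have hC' : Function.Injective ((ofMatrix M⁻¹ Vq μ).delassus q) := by
    rw [delassus_ofMatrix]
    exact mulVec_injective_of_isUnit hC
  exact State.mk.inj <| eulerA_eulerB_adjoint_general (ofMatrix M⁻¹ Vq μ) hh.ne'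
    (z := ⟨q, pt, lt⟩) (z' := ⟨q', pt', lt'⟩) (z'' := ⟨q'', pt'', lt''⟩)
    ((isEulerBStep_neg_iff _).2 ⟨hBq, hBp, hBc⟩) ((isEulerAStep_iff _).2 ⟨hAq, hAp, hAc⟩) hC'
end

section
/- Let M be an invertible symmetric n×n real matrix, V : ℝⁿ → ℝ differentiable with gradient V_q, μ : ℝⁿ → ℝ^{m×n}, and h > 0. Define the discrete Lagrangian L_d^A(x, y) = h · ( (1/2)·((y−x)/h)ᵀ M ((y−x)/h) − V(x) ). Then for q_{k−1}, q_k, q_{k+1} ∈ ℝⁿ and λ ∈ ℝᵐ, the GNI equations D₁L_d^A(q_k, q_{k+1}) + D₂L_d^A(q_{k−1}, q_k) = μ(q_k)ᵀ λ and μ(q_k) M⁻¹ ( D₁L_d^A(q_k, q_{k+1}) − D₂L_d^A(q_{k−1}, q_k) ) = 0 hold if and only if, with λ̃ = λ/h, the nonholonomic Euler A scheme holds: q_{k+1} − 2q_k + q_{k−1} = −h² M⁻¹ ( V_q(q_k) + μ(q_k)ᵀ λ̃ ) and μ(q_k) ( (q_{k+1} − q_{k−1})/(2h) + (h/2) M⁻¹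 V_q(q_k) ) = 0. -/
/-!
For symmetric `M` the quadratic form `½ vᵀ M v` has gradient `M v`, so
`D₁L_d^A(x, y) = -h⁻¹ M (y - x) - h V_q(x)` and `D₂L_d^A(x, y) = h⁻¹ M (y - x)`.
At `q_k` the sum of the two gradients is `-h⁻¹ M (q_{k+1} - 2 q_k + q_{k-1}) - h V_q(q_k)`, and
solving for the second difference gives the first equation of the scheme. Applying `M⁻¹` to
`D₁L_d^A - D₂L_d^A` gives `-2` times the vector that the second equation requires to be annihilated
by `μ(q_k)`.
-/

open Matrix

section VecCLM

variable {n : ℕ}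

lemma vecCLM_apply (w v : Fin n → ℝ) : vecCLM w v = w ⬝ᵥ v := by
  simp [vecCLM, dotProduct]

lemma vecCLM_injective : Function.Injective (vecCLM (n := n)) := fun a b hab =>
  dotProduct_eq a b fun v => by simpa only [vecCLM_apply] using DFunLike.congr_fun hab v

lemma vecCLM_sub (a b : Fin n → ℝ) : vecCLM (a - b) = vecCLM a - vecCLM b := by
  ext1 v
  simp [vecCLM_apply, sub_dotProduct]

lemma vecCLM_smul (c : ℝ) (a : Fin n → ℝ) : vecCLM (c • a) = c • vecCLM a := by
  ext1 v
  simp [vecCLM_apply]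

end VecCLM

section QuadraticForm

variable {n : ℕ} (M : Matrix (Fin n) (Fin n) ℝ)

lemma hasFDerivAt_dotProduct_mulVec_self (x : Fin n → ℝ) :
    HasFDerivAt (fun y => y ⬝ᵥ M *ᵥ y) (vecCLM ((M + Mᵀ) *ᵥ x)) x := by
  let B := (dotProductBilin ℝ ℝ).compl₂ M.mulVecLin |>.toContinuousBilinearMap
  refine (B.hasFDerivAt_of_bilinear (hasFDerivAt_id x) (hasFDerivAt_id x)).congr_fderiv ?_
  ext1 v
  calc x ⬝ᵥ M *ᵥ v + v ⬝ᵥ M *ᵥ x = ((M + Mᵀ) *ᵥ x) ⬝ᵥ v := by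
        rw [dotProduct_mulVec, ← mulVec_transpose, dotProduct_comm v, add_mulVec, add_dotProduct,
          add_comm]
    _ = vecCLM ((M + Mᵀ) *ᵥ x) v := (vecCLM_apply _ _).symm

variable {M}

lemma hasFDerivAt_half_dotProduct_mulVec_self (hM : M.IsSymm) (x : Fin n → ℝ) :
    HasFDerivAt (fun y => (1 / 2) * (y ⬝ᵥ M *ᵥ y)) (vecCLM (M *ᵥ x)) x := by
  refine ((hasFDerivAt_dotProduct_mulVec_self M x).const_mul (1 / 2)).congr_fderiv ?_
  rw [← vecCLM_smul, hM.eq, add_mulVec]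
  congr 1
  module

lemma hasFDerivAt_half_dotProduct_mulVec_smul_sub (hM : M.IsSymm) (a : ℝ) (c x : Fin n → ℝ) :
    HasFDerivAt (fun y => (1 / 2) * ((a • (y - c)) ⬝ᵥ M *ᵥ (a • (y - c))))
      (vecCLM (a ^ 2 • M *ᵥ (x - c))) x := by
  have hinner : HasFDerivAt (fun y => a • (y - c)) (a • ContinuousLinearMap.id ℝ (Fin n → ℝ)) x :=
    ((hasFDerivAt_id x).sub_const c).const_smul a
  refine ((hasFDerivAt_half_dotProduct_mulVec_self hM _).comp x hinner).congr_fderiv ?_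
  ext1 v
  simp [vecCLM_apply, mulVec_smul, sq, mul_assoc]

end QuadraticForm

section EulerALagrangian

variable {n : ℕ} {M : Matrix (Fin n) (Fin n) ℝ} {V : (Fin n → ℝ) → ℝ} {h : ℝ}

/-- The discrete Lagrangian `L_d^A(x, y) = h L(x, (y - x) / h)` of the mechanical Lagrangian
`L(q, v) = ½ vᵀ M v - V(q)`: the action over one time step `h` is approximated with the potential
evaluated at the left endpoint. -/
noncomputable def eulerALagrangian (M : Matrix (Fin n) (Fin n) ℝ) (V : (Fin n → ℝ) → ℝ) (h : ℝ)
    (x y : Fin n → ℝ) : ℝ :=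
  h * ((1 / 2) * (((1 / h) • (y - x)) ⬝ᵥ M *ᵥ ((1 / h) • (y - x))) - V x)

lemma hasFDerivAt_eulerALagrangian_left (hM : M.IsSymm) (hh : h ≠ 0) {g x : Fin n → ℝ}
    (hV : HasFDerivAt V (vecCLM g) x) (y : Fin n → ℝ) :
    HasFDerivAt (fun z => eulerALagrangian M V h z y)
      (vecCLM (-h⁻¹ • M *ᵥ (y - x) - h • g)) x := by
  have hswap (z : Fin n → ℝ) : (1 / h) • (y - z) = -h⁻¹ • (z - y) := by
    rw [one_div, neg_smul, ← smul_neg, neg_sub]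
  simp only [eulerALagrangian, hswap]
  refine (((hasFDerivAt_half_dotProduct_mulVec_smul_sub hM (-h⁻¹) y x).sub hV).const_mul
    h).congr_fderiv ?_
  rw [← vecCLM_sub, ← vecCLM_smul, ← neg_sub x y, mulVec_neg]
  congr 1
  match_scalars <;> field_simp

lemma hasFDerivAt_eulerALagrangian_right (hM : M.IsSymm) (hh : h ≠ 0) (x y : Fin n → ℝ) :
    HasFDerivAt (eulerALagrangian M V h x) (vecCLM (h⁻¹ • M *ᵥ (y - x))) y := by
  refine (((hasFDerivAt_half_dotProduct_mulVec_smul_sub hM (1 / h) x y).sub_const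
    (V x)).const_mul h).congr_fderiv ?_
  rw [← vecCLM_smul]
  congr 1
  match_scalars
  field_simp

end EulerALagrangian

section InvMulVec

variable {ι R : Type*} [Fintype ι] [DecidableEq ι] [CommRing R] {M : Matrix ι ι R}

lemma inv_mulVec_mulVec_of_isUnit (hM : IsUnit M) (v : ι → R) : M⁻¹ *ᵥ (M *ᵥ v) = v := by
  rw [mulVec_mulVec, nonsing_inv_mul M ((isUnit_iff_isUnit_det M).1 hM), one_mulVec]

lemma mulVec_eq_iff_eq_inv_mulVec (hM : IsUnit M) {v w : ι → R} :
    M *ᵥ v = w ↔ v = M⁻¹ *ᵥ w := by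
  rw [← (mulVec_injective_of_isUnit (isUnit_nonsing_inv_iff.2 hM)).eq_iff,
    inv_mulVec_mulVec_of_isUnit hM]

end InvMulVec

section EulerAAlgebra

variable {ι K : Type*} [Fintype ι] [DecidableEq ι] [Field K] {M : Matrix ι ι K} {h : K}

lemma eulerA_gradient_add_eq_iff (hM : IsUnit M) (hh : h ≠ 0) (q₀ q₁ q₂ g F : ι → K) :
    (-h⁻¹ • M *ᵥ (q₂ - q₁) - h • g) + h⁻¹ • M *ᵥ (q₁ - q₀) = F ↔
      q₂ - (2 : K) • q₁ + q₀ = -(h ^ 2) • (M⁻¹ *ᵥ (g + h⁻¹ • F)) := by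
  have hsum : (-h⁻¹ • M *ᵥ (q₂ - q₁) - h • g) + h⁻¹ • M *ᵥ (q₁ - q₀) =
      -h⁻¹ • (M *ᵥ (q₂ - (2 : K) • q₁ + q₀) + h ^ 2 • g) := by
    simp only [mulVec_add, mulVec_sub, mulVec_smul]
    match_scalars <;> field_simp
    ring
  have hforce : -(h ^ 2) • (g + h⁻¹ • F) = -h • F - h ^ 2 • g := by
    match_scalars <;> field_simp
  rw [hsum]
  calc -h⁻¹ • (M *ᵥ (q₂ - (2 : K) • q₁ + q₀) + h ^ 2 • g) = F
      ↔ M *ᵥ (q₂ - (2 : K) • q₁ + q₀) + h ^ 2 • g = -h • F := by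
        rw [neg_smul, ← smul_neg, inv_smul_eq_iff₀ hh, neg_eq_iff_eq_neg, neg_smul]
    _ ↔ M *ᵥ (q₂ - (2 : K) • q₁ + q₀) = -(h ^ 2) • (g + h⁻¹ • F) := by
        rw [hforce, eq_sub_iff_add_eq]
    _ ↔ q₂ - (2 : K) • q₁ + q₀ = -(h ^ 2) • (M⁻¹ *ᵥ (g + h⁻¹ • F)) := by
        rw [mulVec_eq_iff_eq_inv_mulVec hM, mulVec_smul]

lemma inv_mulVec_eulerA_gradient_sub (hM : IsUnit M) (hh : h ≠ 0) (h2 : (2 : K) ≠ 0)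
    (q₀ q₁ q₂ g : ι → K) :
    M⁻¹ *ᵥ ((-h⁻¹ • M *ᵥ (q₂ - q₁) - h • g) - h⁻¹ • M *ᵥ (q₁ - q₀)) =
      (-2 : K) • ((1 / (2 * h)) • (q₂ - q₀) + (h / 2) • (M⁻¹ *ᵥ g)) := by
  simp only [mulVec_sub M⁻¹, mulVec_smul, inv_mulVec_mulVec_of_isUnit hM]
  match_scalars <;> field_simp
  ring

end EulerAAlgebra

/-- For the discrete Lagrangian
`L_d^A(x,y) = h((1/2)((y−x)/h)ᵀ M ((y−x)/h) − V(x))`, the GNI equations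
`D₁L_d^A(q_k,q_{k+1}) + D₂L_d^A(q_{k−1},q_k) = μ(q_k)ᵀλ` and
`μ(q_k) M⁻¹ (D₁L_d^A(q_k,q_{k+1}) − D₂L_d^A(q_{k−1},q_k)) = 0`
hold iff, with `λ̃ = λ/h`, the nonholonomic Euler A scheme holds:
`q_{k+1} − 2q_k + q_{k−1} = −h² M⁻¹(V_q(q_k) + μ(q_k)ᵀλ̃)` and
`μ(q_k)((q_{k+1} − q_{k−1})/(2h) + (h/2) M⁻¹ V_q(q_k)) = 0`. -/
theorem gni_eulerA_scheme {n m : ℕ}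
    (M : Matrix (Fin n) (Fin n) ℝ) (hM : IsUnit M) (hMsymm : Mᵀ = M)
    (V : (Fin n → ℝ) → ℝ) (Vq : (Fin n → ℝ) → Fin n → ℝ)
    (hV : ∀ x, HasFDerivAt V (vecCLM (Vq x)) x)
    (μ : (Fin n → ℝ) → Matrix (Fin m) (Fin n) ℝ)
    (h : ℝ) (hh : 0 < h)
    (Ld : (Fin n → ℝ) → (Fin n → ℝ) → ℝ)
    (hLd : ∀ x y, Ld x y =
      h * ((1 / 2) * (((1 / h) • (y - x)) ⬝ᵥ M *ᵥ ((1 / h) • (y - x))) - V x))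
    (q0 q1 q2 : Fin n → ℝ) (lam : Fin m → ℝ)
    (D1 D2 : Fin n → ℝ)
    (hD1 : HasFDerivAt (fun x => Ld x q2) (vecCLM D1) q1)
    (hD2 : HasFDerivAt (fun y => Ld q0 y) (vecCLM D2) q1) :
    (D1 + D2 = (μ q1)ᵀ *ᵥ lam ∧ μ q1 *ᵥ (M⁻¹ *ᵥ (D1 - D2)) = 0) ↔
      (q2 - (2 : ℝ) • q1 + q0 =
          -(h ^ 2) • (M⁻¹ *ᵥ (Vq q1 + (μ q1)ᵀ *ᵥ (h⁻¹ • lam))) ∧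
        μ q1 *ᵥ ((1 / (2 * h)) • (q2 - q0) + (h / 2) • (M⁻¹ *ᵥ Vq q1)) = 0) := by
  obtain rfl : Ld = eulerALagrangian M V h := funext₂ hLd
  have hD1_eq : D1 = -h⁻¹ • M *ᵥ (q2 - q1) - h • Vq q1 :=
    vecCLM_injective (hD1.unique (hasFDerivAt_eulerALagrangian_left hMsymm hh.ne' (hV q1) q2))
  have hD2_eq : D2 = h⁻¹ • M *ᵥ (q1 - q0) :=
    vecCLM_injective (hD2.unique (hasFDerivAt_eulerALagrangian_right hMsymm hh.ne' q0 q1))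
  rw [hD1_eq, hD2_eq]
  refine and_congr ?_ ?_
  · rw [mulVec_smul (μ q1)ᵀ]
    exact eulerA_gradient_add_eq_iff hM hh.ne' q0 q1 q2 (Vq q1) ((μ q1)ᵀ *ᵥ lam)
  · rw [inv_mulVec_eulerA_gradient_sub hM hh.ne' two_ne_zero, mulVec_smul,
      smul_eq_zero_iff_right (neg_ne_zero.2 two_ne_zero)]
end

section
/- Let M be an invertible n×n real matrix, φ : ℝⁿ × ℝⁿ → ℝⁿ continuously differentiable and globally Lipschitz, T > 0, and let (q(t), p(t)) be a C¹ solution on [0, T] of q̇ = M⁻¹ p, ṗ = φ(q, p). Then the scheme q_{k+1} = q_k + h M⁻¹ p_{k+1/2}, p_{k+1/2} = p_{k−1/2} + h φ(q_k, p_{k+1/2}) is globally first-order convergent: there exist constants K > 0 and h₀ > 0 such that for every 0 < h ≤ h₀, every sequence (q_k, p_{k+1/2}) satisfying the scheme with q_0 = q(0) and p_{−1/2} = p(0), and every integer k ≥ 0 with k·h ≤ T, one has ‖q_k − q(k·h)‖ + ‖p_{k−1/2} − p(k·h)‖ ≤ K·h. -/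
open Matrix

/-!
Regard the scheme as an implicit one-step method `z_{k+1} = z_k + h Ψ(z_k, z_{k+1})` for
`z = (q, p)` and the vector field `z ↦ Ψ(z, z)`, with `Ψ` Lipschitz. On `[0, T]` the exact solution
has bounded speed, so inserting it into one step leaves a residual `O(h²)`. Once `h` is small
compared with the inverse Lipschitz constant, the implicit error recursion can be solved for the new
error, and the discrete Grönwall inequality sums the residuals to `O(h)`.
-/

open Set
open scoped NNReal

lemma discrete_gronwall_of_forall_lt {u : ℕ → ℝ} {b c : ℝ} {N : ℕ} (hu₀ : ∀ n, 0 ≤ u n)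
    (hc : 0 ≤ c) (hb : 0 ≤ b) (hu : ∀ n < N, u (n + 1) ≤ (1 + c) * u n + b) :
    u N ≤ (u 0 + N * b) * Real.exp (N * c) := by
  -- Freezing `u` at time `N` makes the recursion hold at all times.
  have hstep : ∀ n ≥ 0, u (min (n + 1) N) ≤ (1 + c) * u (min n N) + b := by
    intro n _
    rcases lt_or_ge n N with hn | hn
    · simpa only [min_eq_left hn.le, min_eq_left (Nat.succ_le_of_lt hn)] using hu n hn
    · rw [min_eq_right hn, min_eq_right (hn.trans n.le_succ)]
      linarith [mul_nonneg hc (hu₀ N)]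
  simpa using discrete_gronwall (u := fun n ↦ u (min n N)) (hu₀ _) hstep
    (fun _ _ ↦ hc) (fun _ _ ↦ hb) N.zero_le

lemma le_one_add_two_mul_mul_add_of_le_add_mul_max {a a' x r : ℝ} (ha : 0 ≤ a) (hr : 0 ≤ r)
    (hx₀ : 0 ≤ x) (hx : x ≤ 1 / 2) (h : a' ≤ a + x * max a a' + r) :
    a' ≤ (1 + 2 * x) * a + 2 * r := by
  rcases le_total a' a with haa' | haa'
  · rw [max_eq_left haa'] at h
    linarith [mul_nonneg hx₀ ha]
  · rw [max_eq_right haa'] at h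
    have hgain : 1 ≤ (1 + 2 * x) * (1 - x) := by nlinarith
    have ha' : 0 ≤ a' := ha.trans haa'
    calc a' ≤ (1 + 2 * x) * (1 - x) * a' := le_mul_of_one_le_left ha' hgain
      _ = (1 + 2 * x) * ((1 - x) * a') := mul_assoc _ _ _
      _ ≤ (1 + 2 * x) * (a + r) := by gcongr; linarith
      _ ≤ (1 + 2 * x) * a + 2 * r := by nlinarith

section OneStep

variable {X : Type*} [NormedAddCommGroup X] [NormedSpace ℝ X] {Ψ : X × X → X} {L : ℝ≥0}

/-- `Z` is a trajectory, with step size `h`, of the one-step method with increment function `Ψ`.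
The method is implicit: `Ψ` takes both the old and the new state. It discretizes the autonomous
ODE with vector field `z ↦ Ψ (z, z)`. -/
def IsOneStepTrajectory (Ψ : X × X → X) (h : ℝ) (Z : ℕ → X) : Prop :=
  ∀ k, Z (k + 1) = Z k + h • Ψ (Z k, Z (k + 1))

/-- Global first-order convergence on `[0, T]`, towards the curve `z`, of the one-step method with
increment function `Ψ`. Only existing trajectories are compared with `z`; solvability of the
implicit step is not part of the notion. -/
def IsFirstOrderConvergent (Ψ : X × X → X) (z : ℝ → X) (T : ℝ) : Prop :=
  ∃ K > (0 : ℝ), ∃ h₀ > (0 : ℝ), ∀ h : ℝ, 0 < h → h ≤ h₀ → ∀ Z : ℕ → X, Z 0 = z 0 →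
    IsOneStepTrajectory Ψ h Z → ∀ k : ℕ, (k : ℝ) * h ≤ T → ‖Z k - z (k * h)‖ ≤ K * h

lemma norm_sub_le_add_norm_residual (hΨ : LipschitzWith L Ψ) {h : ℝ} (hh : 0 ≤ h) {a a' : X}
    (ha : a' = a + h • Ψ (a, a')) (b b' : X) :
    ‖a' - b'‖ ≤ ‖a - b‖ + h * L * max ‖a - b‖ ‖a' - b'‖ + ‖b' - b - h • Ψ (b, b')‖ := by
  have hsplit : a' - b' =
      (a - b) + h • (Ψ (a, a') - Ψ (b, b')) - (b' - b - h • Ψ (b, b')) := by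
    nth_rewrite 1 [ha]
    module
  have hincr : ‖h • (Ψ (a, a') - Ψ (b, b'))‖ ≤ h * L * max ‖a - b‖ ‖a' - b'‖ := by
    rw [norm_smul, Real.norm_of_nonneg hh, mul_assoc]
    exact mul_le_mul_of_nonneg_left (hΨ.norm_sub_le _ _) hh
  calc ‖a' - b'‖
      = ‖(a - b) + h • (Ψ (a, a') - Ψ (b, b')) - (b' - b - h • Ψ (b, b'))‖ := congrArg norm hsplit
    _ ≤ ‖a - b‖ + ‖h • (Ψ (a, a') - Ψ (b, b'))‖ + ‖b' - b - h • Ψ (b, b')‖ :=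
      (norm_sub_le _ _).trans (add_le_add_left (norm_add_le _ _) _)
    _ ≤ _ := by gcongr

lemma norm_oneStep_residual_le (hΨ : LipschitzWith L Ψ) {z : ℝ → X} {s t C : ℝ} (hst : s ≤ t)
    (hz : ∀ u ∈ Icc s t, HasDerivWithinAt z (Ψ (z u, z u)) (Icc s t) u)
    (hC : ∀ u ∈ Icc s t, ‖Ψ (z u, z u)‖ ≤ C) :
    ‖z t - z s - (t - s) • Ψ (z s, z t)‖ ≤ L * C * (t - s) ^ 2 := by
  have hs : s ∈ Icc s t := left_mem_Icc.2 hst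
  have ht : t ∈ Icc s t := right_mem_Icc.2 hst
  have hC₀ : 0 ≤ C := (norm_nonneg _).trans (hC s hs)
  have hnear : ∀ u ∈ Icc s t, ∀ v ∈ Icc s t, ‖z u - z v‖ ≤ C * (t - s) := fun u hu v hv ↦
    ((convex_Icc s t).norm_image_sub_le_of_norm_hasDerivWithin_le hz hC hv hu).trans
      (mul_le_mul_of_nonneg_left (Real.dist_le_of_mem_Icc hu hv) hC₀)
  have hvel : ∀ u ∈ Icc s t, ‖Ψ (z u, z u) - Ψ (z s, z t)‖ ≤ L * (C * (t - s)) := fun u hu ↦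
    (hΨ.norm_sub_le _ _).trans <|
      mul_le_mul_of_nonneg_left (max_le (hnear u hu s hs) (hnear u hu t ht)) L.2
  have hmean := (convex_Icc s t).norm_image_sub_le_of_norm_hasFDerivWithin_le'
    (fun u hu ↦ (hz u hu).hasFDerivWithinAt)
    (φ := ContinuousLinearMap.toSpanSingleton ℝ (Ψ (z s, z t)))
    (fun u hu ↦ by
      simpa only [← ContinuousLinearMap.toSpanSingletonLIE_apply, ← map_sub,
        LinearIsometryEquiv.norm_map] using hvel u hu) hs ht
  calc ‖z t - z s - (t - s) • Ψ (z s, z t)‖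
      ≤ L * (C * (t - s)) * ‖t - s‖ := hmean
    _ = L * C * (t - s) ^ 2 := by rw [Real.norm_of_nonneg (sub_nonneg.2 hst)]; ring

theorem IsOneStepTrajectory.norm_sub_le (hΨ : LipschitzWith L Ψ) {z : ℝ → X} {T C h : ℝ}
    (hz : ∀ t ∈ Icc 0 T, HasDerivWithinAt z (Ψ (z t, z t)) (Icc 0 T) t)
    (hC : ∀ t ∈ Icc 0 T, ‖Ψ (z t, z t)‖ ≤ C) (hh : 0 ≤ h) (hhL : h * L ≤ 1 / 2)
    {Z : ℕ → X} (hZ : IsOneStepTrajectory Ψ h Z) (hZ₀ : Z 0 = z 0) {N : ℕ} (hN : N * h ≤ T) :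
    ‖Z N - z (N * h)‖ ≤ 2 * L * C * T * Real.exp (2 * L * T) * h := by
  have hT : 0 ≤ T := (by positivity : 0 ≤ N * h).trans hN
  have hC₀ : 0 ≤ C := (norm_nonneg _).trans (hC 0 (left_mem_Icc.2 hT))
  have hstep : ∀ k < N, ‖Z (k + 1) - z ((k + 1 : ℕ) * h)‖ ≤
      (1 + 2 * (h * L)) * ‖Z k - z (k * h)‖ + 2 * (L * C * h ^ 2) := by
    intro k hk
    have hlen : ((k + 1 : ℕ) : ℝ) * h - k * h = h := by push_cast; ring
    have hend : ((k + 1 : ℕ) : ℝ) * h ≤ T :=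
      (mul_le_mul_of_nonneg_right (by exact_mod_cast hk) hh).trans hN
    have hsub : Icc (k * h) ((k + 1 : ℕ) * h) ⊆ Icc 0 T := Icc_subset_Icc (by positivity) hend
    have hres := norm_oneStep_residual_le hΨ (by linarith) (fun t ht ↦ (hz t (hsub ht)).mono hsub)
      (fun t ht ↦ hC t (hsub ht))
    rw [hlen] at hres
    exact le_one_add_two_mul_mul_add_of_le_add_mul_max (norm_nonneg _) (by positivity)
      (by positivity) hhL <|
        (norm_sub_le_add_norm_residual hΨ hh (hZ k) _ _).trans (add_le_add_right hres _)
  calc ‖Z N - z (N * h)‖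
      ≤ (‖Z 0 - z ((0 : ℕ) * h)‖ + N * (2 * (L * C * h ^ 2))) *
          Real.exp (N * (2 * (h * L))) :=
        discrete_gronwall_of_forall_lt (u := fun k : ℕ ↦ ‖Z k - z (k * h)‖)
          (fun _ ↦ norm_nonneg _) (by positivity) (by positivity) hstep
    _ = 2 * L * C * (N * h) * Real.exp (2 * L * (N * h)) * h := by
        rw [Nat.cast_zero, zero_mul, hZ₀, sub_self, norm_zero]
        ring_nf
    _ ≤ 2 * L * C * T * Real.exp (2 * L * T) * h := by gcongr

theorem isFirstOrderConvergent_of_lipschitzWith (hΨ : LipschitzWith L Ψ) {z : ℝ → X} {T : ℝ}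
    (hz : ∀ t ∈ Icc 0 T, HasDerivWithinAt z (Ψ (z t, z t)) (Icc 0 T) t) :
    IsFirstOrderConvergent Ψ z T := by
  have hzc : ContinuousOn z (Icc 0 T) := fun t ht ↦ (hz t ht).continuousWithinAt
  obtain ⟨C, hC⟩ := isCompact_Icc.exists_bound_of_continuousOn
    (hΨ.continuous.comp_continuousOn (hzc.prodMk hzc))
  -- The absolute value and the shifts by `1` only serve to make both constants positive.
  refine ⟨|2 * L * C * T * Real.exp (2 * L * T)| + 1, by positivity, 1 / (2 * (L + 1)),
    by positivity, fun h hh hh₀ Z hZ₀ hZ k hk ↦ ?_⟩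
  have hhL : h * L ≤ 1 / 2 := by
    rw [le_div_iff₀ (by positivity)] at hh₀
    linarith
  refine (hZ.norm_sub_le hΨ hz hC hh.le hhL hZ₀ hk).trans (mul_le_mul_of_nonneg_right ?_ hh.le)
  exact (le_abs_self _).trans (le_add_of_nonneg_right zero_le_one)

end OneStep

section MidpointMomentum

variable {E F : Type*}

/-- The increment function of the scheme `Q (k + 1) = Q k + h • f (P (k + 1))`,
`P (k + 1) = P k + h • φ (Q k, P (k + 1))` for the system `q' = f p`, `p' = φ (q, p)`. Here `P k`
stands for the momentum at time `k - 1/2` of the paper. -/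
def midpointMomentumIncrement (f : F → E) (φ : E × F → F) : (E × F) × (E × F) → E × F :=
  fun w ↦ (f w.2.2, φ (w.1.1, w.2.2))

lemma lipschitzWith_midpointMomentumIncrement [PseudoEMetricSpace E] [PseudoEMetricSpace F]
    {f : F → E} {φ : E × F → F} {Lf Lφ : ℝ≥0}
    (hf : LipschitzWith Lf f) (hφ : LipschitzWith Lφ φ) :
    LipschitzWith (max Lf Lφ) (midpointMomentumIncrement f φ) := by
  have hP : LipschitzWith 1 fun w : (E × F) × (E × F) ↦ w.2.2 := by
    simpa [Function.comp_def] using LipschitzWith.prod_snd.comp LipschitzWith.prod_snd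
  have hQ : LipschitzWith 1 fun w : (E × F) × (E × F) ↦ w.1.1 := by
    simpa [Function.comp_def] using LipschitzWith.prod_fst.comp LipschitzWith.prod_fst
  have hfφ : LipschitzWith (max (Lf * 1) (Lφ * max 1 1)) (midpointMomentumIncrement f φ) :=
    (hf.comp hP).prodMk (hφ.comp (hQ.prodMk hP))
  simpa using hfφ

theorem midpoint_momentum_scheme_first_order_convergent_general
    [NormedAddCommGroup E] [NormedSpace ℝ E] [NormedAddCommGroup F] [NormedSpace ℝ F]
    {f : F → E} {φ : E × F → F} {Lf Lφ : ℝ≥0}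
    (hf : LipschitzWith Lf f) (hφ : LipschitzWith Lφ φ) {T : ℝ} {q : ℝ → E} {p : ℝ → F}
    (hq : ∀ t ∈ Icc 0 T, HasDerivWithinAt q (f (p t)) (Icc 0 T) t)
    (hp : ∀ t ∈ Icc 0 T, HasDerivWithinAt p (φ (q t, p t)) (Icc 0 T) t) :
    ∃ K > (0 : ℝ), ∃ h₀ > (0 : ℝ), ∀ h : ℝ, 0 < h → h ≤ h₀ →
      ∀ (Q : ℕ → E) (P : ℕ → F),
        Q 0 = q 0 → P 0 = p 0 →
        (∀ k : ℕ, P (k + 1) = P k + h • φ (Q k, P (k + 1))) →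
        (∀ k : ℕ, Q (k + 1) = Q k + h • f (P (k + 1))) →
        ∀ k : ℕ, (k : ℝ) * h ≤ T →
          ‖Q k - q ((k : ℝ) * h)‖ + ‖P k - p ((k : ℝ) * h)‖ ≤ K * h := by
  have hz : ∀ t ∈ Icc 0 T, HasDerivWithinAt (fun t ↦ (q t, p t))
      (midpointMomentumIncrement f φ ((q t, p t), (q t, p t))) (Icc 0 T) t :=
    fun t ht ↦ (hq t ht).prodMk (hp t ht)
  have hΨ := lipschitzWith_midpointMomentumIncrement hf hφ
  obtain ⟨K, hK, h₀, hh₀, hconv⟩ := isFirstOrderConvergent_of_lipschitzWith hΨ hz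
  refine ⟨2 * K, by positivity, h₀, hh₀, fun h hh hhh₀ Q P hQ₀ hP₀ hP hQ k hk ↦ ?_⟩
  have hQP : IsOneStepTrajectory (midpointMomentumIncrement f φ) h fun k ↦ (Q k, P k) :=
    fun k ↦ Prod.ext (hQ k) (hP k)
  have herr : max ‖Q k - q (k * h)‖ ‖P k - p (k * h)‖ ≤ K * h :=
    hconv h hh hhh₀ _ (Prod.ext hQ₀ hP₀) hQP k hk
  calc ‖Q k - q (k * h)‖ + ‖P k - p (k * h)‖ ≤ K * h + K * h :=
        add_le_add ((le_max_left _ _).trans herr) ((le_max_right _ _).trans herr)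
    _ = 2 * K * h := by ring

end MidpointMomentum

/-- For the ODE `q̇ = M⁻¹p`, `ṗ = φ(q,p)` with `M` invertible and
`φ` continuously differentiable and globally Lipschitz, the scheme
`q_{k+1} = q_k + h M⁻¹ p_{k+1/2}`, `p_{k+1/2} = p_{k−1/2} + h φ(q_k, p_{k+1/2})`
is globally first-order convergent on `[0,T]`. Here `P k` stands for
`p_{k−1/2}`, with `P 0 = p_{−1/2} = p(0)`. -/
theorem midpoint_momentum_scheme_first_order_convergent {n : ℕ}
    (M : Matrix (Fin n) (Fin n) ℝ) (hM : IsUnit M)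
    (φ : (Fin n → ℝ) × (Fin n → ℝ) → Fin n → ℝ)
    (hφ : ContDiff ℝ 1 φ) (Lip : NNReal) (hLip : LipschitzWith Lip φ)
    (T : ℝ) (hT : 0 < T)
    (q p : ℝ → Fin n → ℝ)
    (hq : ∀ t ∈ Set.Icc (0 : ℝ) T, HasDerivAt q (M⁻¹ *ᵥ p t) t)
    (hp : ∀ t ∈ Set.Icc (0 : ℝ) T, HasDerivAt p (φ (q t, p t)) t) :
    ∃ K > (0 : ℝ), ∃ h₀ > (0 : ℝ), ∀ h : ℝ, 0 < h → h ≤ h₀ →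
      ∀ Q P : ℕ → Fin n → ℝ,
        Q 0 = q 0 → P 0 = p 0 →
        (∀ k : ℕ, P (k + 1) = P k + h • φ (Q k, P (k + 1))) →
        (∀ k : ℕ, Q (k + 1) = Q k + h • (M⁻¹ *ᵥ P (k + 1))) →
        ∀ k : ℕ, (k : ℝ) * h ≤ T →
          ‖Q k - q ((k : ℝ) * h)‖ + ‖P k - p ((k : ℝ) * h)‖ ≤ K * h := by
  exact midpoint_momentum_scheme_first_order_convergent_general
    (LinearMap.toContinuousLinearMap (M⁻¹).mulVecLin).lipschitz hLip
    (fun t ht ↦ (hq t ht).hasDerivWithinAt) (fun t ht ↦ (hp t ht).hasDerivWithinAt)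
end

section
/- Let τ be a map from n×n real matrices to n×n real matrices satisfying τ(x)·τ(−x) = 1 for all x, and suppose τ is differentiable at ξ and at −ξ. If ζ and η are n×n matrices with dτ_ξ(ζ) = η, then dτ_{−ξ}(ζ) = Ad_{τ(−ξ)} η = τ(−ξ)·η·τ(ξ). (This expresses the identity dτ_ξ⁻¹(η) = dτ_{−ξ}⁻¹( Ad_{τ(−ξ)} η ) relating the inverses of the right trivialized tangents at ξ and −ξ.) -/
/-!
Since `τ (-x)` is the two-sided inverse of `τ x`, the rule `D(g⁻¹) = -g⁻¹ · Dg · g⁻¹` computes the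
derivative of `x ↦ τ (-x)` at `ξ`, and the chain rule for `x ↦ -x` cancels the sign:
`Dτ(-ξ)ζ = τ(-ξ) · Dτ(ξ)ζ · τ(-ξ)`. Multiplying by `τ(ξ)` on the right gives the claim.
-/

open Matrix

attribute [local instance] Matrix.normedAddCommGroup Matrix.normedSpace

section

open Filter Topology ContinuousLinearMap

variable {𝕜 E A : Type*} [NontriviallyNormedField 𝕜] [NormedAddCommGroup E] [NormedSpace 𝕜 E]
  [NormedRing A] [NormedAlgebra 𝕜 A] [HasSummableGeomSeries A]

theorem hasFDerivAt_of_eventually_inverse {f g : E → A} {f' : E →L[𝕜] A} {x : E}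
    (hf : HasFDerivAt f f' x) (hfg : ∀ᶠ y in 𝓝 x, f y * g y = 1)
    (hgf : ∀ᶠ y in 𝓝 x, g y * f y = 1) :
    HasFDerivAt g (-(mulLeftRight 𝕜 A (g x) (g x) ∘L f')) x := by
  let u : Aˣ := ⟨f x, g x, hfg.self_of_nhds, hgf.self_of_nhds⟩
  have hg : g =ᶠ[𝓝 x] Ring.inverse ∘ f := by
    filter_upwards [hfg, hgf] with y hfgy hgfy
    exact (Ring.inverse_unit ⟨f y, g y, hfgy, hgfy⟩).symm
  have hinv : HasFDerivAt Ring.inverse (-mulLeftRight 𝕜 A (g x) (g x)) (f x) :=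
    hasFDerivAt_ringInverse u
  exact (hinv.comp x hf).congr_of_eventuallyEq hg

theorem hasFDerivAt_neg_of_mul_map_neg_eq_one {τ : E → A} (hτ : ∀ x, τ x * τ (-x) = 1)
    {τ' : E →L[𝕜] A} {ξ : E} (hξ : HasFDerivAt τ τ' ξ) :
    HasFDerivAt τ (mulLeftRight 𝕜 A (τ (-ξ)) (τ (-ξ)) ∘L τ') (-ξ) := by
  have hτ_left (x : E) : τ (-x) * τ x = 1 := by simpa using hτ (-x)
  have hcomp_neg : HasFDerivAt (fun x ↦ τ (-x)) (-(mulLeftRight 𝕜 A (τ (-ξ)) (τ (-ξ)) ∘L τ')) ξ :=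
    hasFDerivAt_of_eventually_inverse hξ (.of_forall hτ) (.of_forall hτ_left)
  rw [← neg_neg ξ] at hcomp_neg
  simpa [Function.comp_def] using hcomp_neg.comp (-ξ) (hasFDerivAt_id (-ξ)).neg

theorem retraction_dtau_inverse_Ad_general (τ : E → A) (hτ : ∀ x, τ x * τ (-x) = 1) (ξ : E)
    (hξ : DifferentiableAt 𝕜 τ ξ) (ζ : E) (η : A) (hζ : fderiv 𝕜 τ ξ ζ * τ (-ξ) = η) :
    fderiv 𝕜 τ (-ξ) ζ * τ ξ = τ (-ξ) * η * τ ξ := by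
  rw [(hasFDerivAt_neg_of_mul_map_neg_eq_one hτ hξ.hasFDerivAt).fderiv, ← hζ]
  simp [mul_assoc]

end

/-- For a matrix retraction-type map `τ` (`τ(x)·τ(−x) = 1`),
differentiable at `ξ` and `−ξ`: if `dτ_ξ(ζ) = η` then
`dτ_{−ξ}(ζ) = Ad_{τ(−ξ)} η = τ(−ξ)·η·τ(ξ)`, where `dτ_x(y) = (Dτ(x)·y)·τ(−x)`.
This expresses `dτ_ξ⁻¹(η) = dτ_{−ξ}⁻¹(Ad_{τ(−ξ)} η)`. -/
theorem retraction_dtau_inverse_Ad {n : ℕ}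
    (τ : Matrix (Fin n) (Fin n) ℝ → Matrix (Fin n) (Fin n) ℝ)
    (hτ : ∀ x, τ x * τ (-x) = 1)
    (ξ : Matrix (Fin n) (Fin n) ℝ)
    (hξ : DifferentiableAt ℝ τ ξ) (hξ' : DifferentiableAt ℝ τ (-ξ))
    (ζ η : Matrix (Fin n) (Fin n) ℝ)
    (hζ : fderiv ℝ τ ξ ζ * τ (-ξ) = η) :
    fderiv ℝ τ (-ξ) ζ * τ ξ = τ (-ξ) * η * τ ξ := by
  -- The entrywise sup norm is not submultiplicative, but `fderiv` depends only on the topology,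
  -- so the `ℓ∞` operator norm may be used instead.
  let _ : NormedRing (Matrix (Fin n) (Fin n) ℝ) := Matrix.linftyOpNormedRing
  let _ : NormedAlgebra ℝ (Matrix (Fin n) (Fin n) ℝ) := Matrix.linftyOpNormedAlgebra
  have : HasSummableGeomSeries (Matrix (Fin n) (Fin n) ℝ) :=
    @instHasSummableGeomSeriesOfCompleteSpace _ _ (FiniteDimensional.complete ℝ _)
  exact retraction_dtau_inverse_Ad_general τ hτ ξ hξ ζ η hζ
end

section
/- Let ω = (ω₁, ω₂, ω₃) ∈ ℝ³ and let ω̂ be its associated skew-symmetric 3×3 matrix under the hat map. Then the matrix 1 − ω̂/2 is invertible, and the Cayley transform of ω̂ is given explicitly by cay(ω̂) = (1 − ω̂/2)⁻¹(1 + ω̂/2) = I₃ + (4 / (4 + ‖ω‖²)) · ( ω̂ + ω̂²/2 ), where ‖ω‖² = ω₁² + ω₂² + ω₃² and I₃ is the 3×3 identity matrix. -/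
/-!
Since `ω̂ v = ω × v`, the identity `ω × (ω × (ω × v)) = -‖ω‖² (ω × v)` shows that `a = ω̂ / 2`
satisfies `a³ = -m a` with `m = ‖ω‖² / 4`. Hence `(a + a²)(1 - a) = a - a³ = (1 + m) a`, so that
`(1 - a)⁻¹ = 1 + (1 + m)⁻¹ (a + a²)`. The Cayley transform is then read off from
`(1 - a)⁻¹ (1 + a) = 2 (1 - a)⁻¹ - 1`.
-/

open Matrix

/-- The hat map sending `ω ∈ ℝ³` to the associated skew-symmetric 3×3 matrix. -/
def hat (ω : Fin 3 → ℝ) : Matrix (Fin 3) (Fin 3) ℝ :=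
  !![0, -ω 2, ω 1; ω 2, 0, -ω 0; -ω 1, ω 0, 0]

section CubicRelation

variable {R A : Type*} [CommRing R] [Ring A] [Algebra R A] {a : A} {m c : R}

lemma add_sq_mul_one_sub_of_pow_three_eq (ha : a ^ 3 = -(m • a)) :
    (a + a ^ 2) * (1 - a) = (1 + m) • a :=
  calc
    (a + a ^ 2) * (1 - a) = a - a ^ 3 := by noncomm_ring
    _ = (1 + m) • a := by rw [ha]; module

lemma one_add_smul_mul_one_sub_of_pow_three_eq (ha : a ^ 3 = -(m • a)) (hc : c * (1 + m) = 1) :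
    (1 + c • (a + a ^ 2)) * (1 - a) = 1 := by
  rw [add_mul, one_mul, smul_mul_assoc, add_sq_mul_one_sub_of_pow_three_eq ha, smul_smul, hc,
    one_smul, sub_add_cancel]

lemma one_add_smul_mul_one_add_of_pow_three_eq (ha : a ^ 3 = -(m • a)) (hc : c * (1 + m) = 1) :
    (1 + c • (a + a ^ 2)) * (1 + a) = 1 + (2 * c) • (a + a ^ 2) :=
  calc
    (1 + c • (a + a ^ 2)) * (1 + a)
        = (2 : R) • (1 + c • (a + a ^ 2)) - (1 + c • (a + a ^ 2)) * (1 - a) := by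
      rw [two_smul]; noncomm_ring
    _ = 1 + (2 * c) • (a + a ^ 2) := by
      rw [one_add_smul_mul_one_sub_of_pow_three_eq ha hc]; module

end CubicRelation

lemma cross_cross_cross_self {R : Type*} [CommRing R] (u v : Fin 3 → R) :
    u ⨯₃ (u ⨯₃ (u ⨯₃ v)) = -((u ⬝ᵥ u) • (u ⨯₃ v)) := by
  rw [cross_cross_eq_smul_sub_smul', dot_self_cross, zero_smul, zero_sub]

lemma hat_mulVec (ω v : Fin 3 → ℝ) : hat ω *ᵥ v = ω ⨯₃ v := by
  ext i
  fin_cases i <;> simp [hat, cross_apply, mulVec, dotProduct, Fin.sum_univ_three] <;> ring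

lemma hat_pow_three (ω : Fin 3 → ℝ) : hat ω ^ 3 = -((ω ⬝ᵥ ω) • hat ω) := by
  refine mulVec_injective (funext fun v ↦ ?_)
  simp only [pow_succ', pow_zero, mul_one, ← mulVec_mulVec, neg_mulVec, smul_mulVec, hat_mulVec,
    cross_cross_cross_self]

lemma smul_hat_pow_three (r : ℝ) (ω : Fin 3 → ℝ) :
    (r • hat ω) ^ 3 = -((r ^ 2 * (ω ⬝ᵥ ω)) • r • hat ω) := by
  rw [smul_pow, hat_pow_three]
  module

/-- For any `ω ∈ ℝ³`, the matrix `1 − ω̂/2` is invertible and the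
Cayley transform of `ω̂` is
`cay(ω̂) = (1 − ω̂/2)⁻¹(1 + ω̂/2) = I₃ + (4/(4 + ‖ω‖²))(ω̂ + ω̂²/2)`. -/
theorem cayley_hat_formula (ω : Fin 3 → ℝ) :
    IsUnit (1 - (2⁻¹ : ℝ) • hat ω) ∧
      (1 - (2⁻¹ : ℝ) • hat ω)⁻¹ * (1 + (2⁻¹ : ℝ) • hat ω) =
        1 + (4 / (4 + (ω 0 ^ 2 + ω 1 ^ 2 + ω 2 ^ 2))) •
          (hat ω + (2⁻¹ : ℝ) • (hat ω * hat ω)) := by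
  have hnorm : ω 0 ^ 2 + ω 1 ^ 2 + ω 2 ^ 2 = ω ⬝ᵥ ω := by
    simp only [vec3_dotProduct, sq]
  have hpos : 0 < 4 + ω ⬝ᵥ ω := by rw [← hnorm]; positivity
  have hc : 4 / (4 + ω ⬝ᵥ ω) * (1 + 2⁻¹ ^ 2 * (ω ⬝ᵥ ω)) = 1 := by field_simp; ring
  have ha := smul_hat_pow_three 2⁻¹ ω
  have hinv := one_add_smul_mul_one_sub_of_pow_three_eq ha hc
  refine ⟨.of_mul_eq_one_right _ hinv, ?_⟩
  rw [inv_eq_left_inv hinv, one_add_smul_mul_one_add_of_pow_three_eq ha hc, hnorm, smul_pow,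
    sq (hat ω)]
  module
end
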